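/- arXiv:2402.16376 — 3 statements merged into one kernel-verified Lean document; each statement's English description precedes it below -/
import Mathlib

section
/- Let m be a Borel probability measure on ℝ with finite second moment such that E(m) > −∞. Then there exists a sequence (mₙ)_{n≥0} of Borel probability measures on ℝ, each having a bounded C^∞ density and a finite second moment, such that mₙ converges narrowly to m and E(mₙ) → E(m) as n → ∞. -/
open MeasureTheory Filter
open scoped ENNReal Topology

/-- The free entropy `E(mu) = (1/2)∫∫ log|x−y| dmu dmu`, as an extended real number:
one half of the difference between the lintegral of the positive part and the lintegral of
the negative part of `log|x−y|` with respect to the product measure. -/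
noncomputable def freeEntropy (mu : Measure ℝ) : EReal :=
  ((1 / 2 : ℝ) : EReal) *
    (((∫⁻ p : ℝ × ℝ, ENNReal.ofReal (Real.log |p.1 - p.2|) ∂(mu.prod mu)) : EReal)
      - ((∫⁻ p : ℝ × ℝ, ENNReal.ofReal (-Real.log |p.1 - p.2|) ∂(mu.prod mu)) : EReal))

/-- The negative part of the logarithmic kernel has finite integral over the line. -/
lemma lintegral_neg_log_abs_ne_top :
    ∫⁻ s : ℝ, ENNReal.ofReal (-Real.log |s|) ≠ ⊤ := by
  have h1 : IntegrableOn Real.log (Set.Ioc (-1) 1) volume := by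
    have h := @intervalIntegral.intervalIntegrable_log' (-1) 1
    rwa [intervalIntegrable_iff_integrableOn_Ioc_of_le (by norm_num)] at h
  have h2 : Integrable ((Set.Ioc (-1 : ℝ) 1).indicator Real.log) volume :=
    (integrable_indicator_iff measurableSet_Ioc).2 h1
  refine ne_top_of_le_ne_top h2.hasFiniteIntegral.ne (lintegral_mono fun s => ?_)
  rw [Real.log_abs, ← ofReal_norm]
  apply ENNReal.ofReal_le_ofReal
  by_cases hs : s ∈ Set.Ioc (-1 : ℝ) 1
  · rw [Set.indicator_of_mem hs]
    exact neg_le_abs _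
  · have h1s : 1 ≤ |s| := by
      by_contra! h
      exact hs ⟨(abs_lt.1 h).1, (abs_lt.1 h).2.le⟩
    have := Real.log_nonneg h1s
    rw [Real.log_abs] at this
    exact (neg_nonpos.2 this).trans (norm_nonneg _)

/-- A measure dominated by a multiple of Lebesgue measure has uniformly bounded logarithmic
potentials from below. -/
lemma lintegral_neg_log_abs_sub_le {μ : Measure ℝ} {M : ℝ≥0∞} (hμ : μ ≤ M • volume) (b : ℝ) :
    ∫⁻ x, ENNReal.ofReal (-Real.log |x - b|) ∂μ
      ≤ M * ∫⁻ s : ℝ, ENNReal.ofReal (-Real.log |s|) := by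
  calc ∫⁻ x, ENNReal.ofReal (-Real.log |x - b|) ∂μ
      ≤ ∫⁻ x, ENNReal.ofReal (-Real.log |x - b|) ∂(M • volume) := lintegral_mono' hμ le_rfl
    _ = M * ∫⁻ x, ENNReal.ofReal (-Real.log |x - b|) := lintegral_smul_measure ..
    _ = _ := by
      rw [lintegral_sub_right_eq_self (fun s : ℝ => ENNReal.ofReal (-Real.log |s|)) b]

lemma log_abs_sub_le (x y : ℝ) : Real.log |x - y| ≤ |x| + |y| :=
  (Real.log_le_self (abs_nonneg _)).trans (abs_sub x y)

lemma measurable_log_abs_sub : Measurable fun p : ℝ × ℝ => Real.log |p.1 - p.2| := by fun_prop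

lemma lintegral_ofReal_log_abs_sub_lt_top {μ ν : Measure ℝ} [IsFiniteMeasure μ]
    [IsFiniteMeasure ν] (hμ : Integrable (fun x => x) μ) (hν : Integrable (fun x => x) ν) :
    ∫⁻ p : ℝ × ℝ, ENNReal.ofReal (Real.log |p.1 - p.2|) ∂(μ.prod ν) < ⊤ := by
  have h : Integrable (fun p : ℝ × ℝ => |p.1| + |p.2|) (μ.prod ν) :=
    (hμ.abs.comp_fst ν).add (hν.abs.comp_snd μ)
  refine lt_of_le_of_lt (lintegral_mono fun p => ?_) h.hasFiniteIntegral
  rw [← ofReal_norm]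
  exact ENNReal.ofReal_le_ofReal ((log_abs_sub_le _ _).trans (le_abs_self _))

/-- The logarithmic kernel is integrable as soon as its negative part is. -/
lemma integrable_log_abs_sub_of_neg_part {μ ν : Measure ℝ} [IsFiniteMeasure μ]
    [IsFiniteMeasure ν] (hμ : Integrable (fun x => x) μ) (hν : Integrable (fun x => x) ν)
    (h : ∫⁻ p : ℝ × ℝ, ENNReal.ofReal (-Real.log |p.1 - p.2|) ∂(μ.prod ν) ≠ ⊤) :
    Integrable (fun p : ℝ × ℝ => Real.log |p.1 - p.2|) (μ.prod ν) := by
  refine ⟨measurable_log_abs_sub.aestronglyMeasurable, ?_⟩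
  have h0 := lintegral_ofReal_log_abs_sub_lt_top hμ hν
  refine lt_of_le_of_lt ?_ (ENNReal.add_lt_top.2 ⟨h0, h.lt_top⟩)
  rw [← lintegral_add_left (by fun_prop)]
  refine lintegral_mono fun p => ?_
  rw [← ofReal_norm, Real.norm_eq_abs]
  rcases le_total 0 (Real.log |p.1 - p.2|) with h | h
  · rw [abs_of_nonneg h]; exact le_self_add
  · rw [abs_of_nonpos h]; exact le_add_self

lemma lintegral_neg_log_abs_sub_prod_le {μ ν : Measure ℝ} [SFinite μ] [SFinite ν]
    {M : ℝ≥0∞} (hμ : μ ≤ M • volume) :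
    ∫⁻ p : ℝ × ℝ, ENNReal.ofReal (-Real.log |p.1 - p.2|) ∂(μ.prod ν)
      ≤ M * (∫⁻ s : ℝ, ENNReal.ofReal (-Real.log |s|)) * ν Set.univ := by
  rw [lintegral_prod_symm _ (by fun_prop), ← lintegral_const]
  exact lintegral_mono fun y => lintegral_neg_log_abs_sub_le hμ y

lemma integrable_log_abs_sub {μ ν : Measure ℝ} [IsFiniteMeasure μ] [IsFiniteMeasure ν]
    {M : ℝ≥0∞} (hM : M ≠ ⊤) (hμM : μ ≤ M • volume)
    (hμ : Integrable (fun x => x) μ) (hν : Integrable (fun x => x) ν) :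
    Integrable (fun p : ℝ × ℝ => Real.log |p.1 - p.2|) (μ.prod ν) :=
  integrable_log_abs_sub_of_neg_part hμ hν <| ne_top_of_le_ne_top
    (ENNReal.mul_ne_top (ENNReal.mul_ne_top hM lintegral_neg_log_abs_ne_top)
      (measure_ne_top ν _)) (lintegral_neg_log_abs_sub_prod_le hμM)

/-- When the logarithmic kernel is integrable, the free entropy is half its integral. -/
lemma freeEntropy_eq_integral {μ : Measure ℝ}
    (h : Integrable (fun p : ℝ × ℝ => Real.log |p.1 - p.2|) (μ.prod μ)) :
    freeEntropy μ = ((1 / 2 * ∫ p : ℝ × ℝ, Real.log |p.1 - p.2| ∂(μ.prod μ) : ℝ) : EReal) := by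
  have h1 : ∫⁻ p : ℝ × ℝ, ENNReal.ofReal (Real.log |p.1 - p.2|) ∂(μ.prod μ) ≠ ⊤ :=
    h.lintegral_lt_top.ne
  have h2 : ∫⁻ p : ℝ × ℝ, ENNReal.ofReal (-Real.log |p.1 - p.2|) ∂(μ.prod μ) ≠ ⊤ :=
    h.neg.lintegral_lt_top.ne
  rw [freeEntropy, integral_eq_lintegral_pos_part_sub_lintegral_neg_part h, EReal.coe_mul,
    EReal.coe_sub, EReal.coe_ennreal_toReal h1, EReal.coe_ennreal_toReal h2]

/-- Finite free entropy forces integrability of the logarithmic kernel. -/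
lemma integrable_log_abs_sub_of_bot_lt_freeEntropy {μ : Measure ℝ} [IsFiniteMeasure μ]
    (hμ : Integrable (fun x => x) μ) (hE : ⊥ < freeEntropy μ) :
    Integrable (fun p : ℝ × ℝ => Real.log |p.1 - p.2|) (μ.prod μ) := by
  refine integrable_log_abs_sub_of_neg_part hμ hμ fun h => hE.ne' ?_
  rw [freeEntropy, h, EReal.coe_ennreal_top, EReal.sub_top,
    EReal.coe_mul_bot_of_pos (by norm_num)]

/-- A smooth probability density supported in `[-1, 1]`. -/
noncomputable def bumpDensity : ℝ → ℝ :=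
  (⟨1 / 2, 1, by norm_num, by norm_num⟩ : ContDiffBump (0 : ℝ)).normed volume

/-- The probability measure with density `bumpDensity`. -/
noncomputable def bumpMeasure : Measure ℝ :=
  volume.withDensity fun x => ENNReal.ofReal (bumpDensity x)

lemma contDiff_bumpDensity : ContDiff ℝ (⊤ : ℕ∞) bumpDensity := ContDiffBump.contDiff_normed _

lemma continuous_bumpDensity : Continuous bumpDensity := contDiff_bumpDensity.continuous

lemma bumpDensity_nonneg (x : ℝ) : 0 ≤ bumpDensity x := ContDiffBump.nonneg_normed _ _

lemma hasCompactSupport_bumpDensity : HasCompactSupport bumpDensity :=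
  ContDiffBump.hasCompactSupport_normed _

lemma exists_bumpDensity_le : ∃ K : ℝ, 0 ≤ K ∧ ∀ x, bumpDensity x ≤ K := by
  obtain ⟨K, hK⟩ :=
    hasCompactSupport_bumpDensity.exists_bound_of_continuous continuous_bumpDensity
  exact ⟨K, (norm_nonneg _).trans (hK 0), fun x => (le_abs_self _).trans (hK x)⟩

lemma isProbabilityMeasure_withDensity_ofReal {f : ℝ → ℝ} (hf : Integrable f)
    (h0 : ∀ x, 0 ≤ f x) (h1 : ∫ x, f x = 1) :
    IsProbabilityMeasure (volume.withDensity fun x => ENNReal.ofReal (f x)) := by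
  constructor
  rw [withDensity_apply _ MeasurableSet.univ, setLIntegral_univ,
    ← ofReal_integral_eq_lintegral_ofReal hf (ae_of_all _ h0), h1, ENNReal.ofReal_one]

instance : IsProbabilityMeasure bumpMeasure :=
  isProbabilityMeasure_withDensity_ofReal (ContDiffBump.integrable_normed _)
    bumpDensity_nonneg (ContDiffBump.integral_normed _)

lemma withDensity_ofReal_le {f : ℝ → ℝ} {M : ℝ} (hf : ∀ x, f x ≤ M) :
    volume.withDensity (fun x => ENNReal.ofReal (f x)) ≤ ENNReal.ofReal M • volume := by
  rw [← withDensity_const]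
  exact withDensity_mono (ae_of_all _ fun x => ENNReal.ofReal_le_ofReal (hf x))

lemma ae_bumpMeasure_abs_le : ∀ᵐ u ∂bumpMeasure, |u| ≤ 1 := by
  rw [bumpMeasure, ae_withDensity_iff (by have := continuous_bumpDensity; fun_prop)]
  refine ae_of_all _ fun u hu => ?_
  have hu' : u ∈ Function.support bumpDensity := fun h => hu (by rw [h, ENNReal.ofReal_zero])
  rw [bumpDensity, ContDiffBump.support_normed_eq] at hu'
  simpa using (mem_ball_zero_iff.1 hu').le

/-- The law of `X + ε U`, where `X` has law `m` and `U` is independent with law `bumpMeasure`. -/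
noncomputable def mollify (m : Measure ℝ) (ε : ℝ) : Measure ℝ :=
  (m.prod bumpMeasure).map fun p => p.1 + ε * p.2

instance (m : Measure ℝ) [IsProbabilityMeasure m] (ε : ℝ) :
    IsProbabilityMeasure (mollify m ε) :=
  Measure.isProbabilityMeasure_map (by fun_prop)

lemma lintegral_comp_add_mul_bumpMeasure {ε : ℝ} (hε : 0 < ε) (x : ℝ) {g : ℝ → ℝ≥0∞}
    (hg : Measurable g) :
    ∫⁻ u, g (x + ε * u) ∂bumpMeasure
      = ∫⁻ z, ENNReal.ofReal (ε⁻¹ * bumpDensity (ε⁻¹ * (z - x))) * g z := by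
  have hb := continuous_bumpDensity
  have h2 : ∫⁻ z, ENNReal.ofReal (ε⁻¹ * bumpDensity (ε⁻¹ * (z - x))) * g z
      = ∫⁻ z, ENNReal.ofReal (ε⁻¹ * bumpDensity (ε⁻¹ * z)) * g (x + z) := by
    rw [← lintegral_sub_right_eq_self (fun z => ENNReal.ofReal (ε⁻¹ * bumpDensity (ε⁻¹ * z))
      * g (x + z)) x]
    simp
  rw [h2, bumpMeasure, lintegral_withDensity_eq_lintegral_mul _ (by fun_prop) (by fun_prop)]
  conv_rhs => rw [← Real.smul_map_volume_mul_left hε.ne', lintegral_smul_measure,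
    lintegral_map (by fun_prop) (by fun_prop), abs_of_pos hε, smul_eq_mul,
    ← lintegral_const_mul _ (by fun_prop)]
  refine lintegral_congr fun u => ?_
  rw [inv_mul_cancel_left₀ hε.ne', ← mul_assoc, ← ENNReal.ofReal_mul hε.le,
    mul_inv_cancel_left₀ hε.ne']
  rfl

lemma mollify_eq_withDensity (m : Measure ℝ) [IsProbabilityMeasure m] {ε : ℝ} (hε : 0 < ε) :
    mollify m ε = volume.withDensity fun z =>
      ENNReal.ofReal (∫ x, ε⁻¹ * bumpDensity (ε⁻¹ * (z - x)) ∂m) := by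
  have hb := continuous_bumpDensity
  obtain ⟨K, hK0, hK⟩ := exists_bumpDensity_le
  have hint (z : ℝ) : Integrable (fun x => ε⁻¹ * bumpDensity (ε⁻¹ * (z - x))) m := by
    refine Integrable.of_bound (by fun_prop) (ε⁻¹ * K) (ae_of_all _ fun x => ?_)
    rw [Real.norm_of_nonneg (mul_nonneg (by positivity) (bumpDensity_nonneg _))]
    gcongr
    exact hK _
  have hden (z : ℝ) : ENNReal.ofReal (∫ x, ε⁻¹ * bumpDensity (ε⁻¹ * (z - x)) ∂m)
      = ∫⁻ x, ENNReal.ofReal (ε⁻¹ * bumpDensity (ε⁻¹ * (z - x))) ∂m :=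
    ofReal_integral_eq_lintegral_ofReal (hint z)
      (ae_of_all _ fun x => mul_nonneg (by positivity) (bumpDensity_nonneg _))
  refine Measure.ext_of_lintegral _ fun g hg => ?_
  rw [mollify, lintegral_map hg (by fun_prop), lintegral_prod _ (by fun_prop)]
  simp_rw [hden, lintegral_comp_add_mul_bumpMeasure hε _ hg]
  rw [lintegral_lintegral_swap (by fun_prop), lintegral_withDensity_eq_lintegral_mul _
    (Measurable.lintegral_prod_right' (f := fun p : ℝ × ℝ =>
      ENNReal.ofReal (ε⁻¹ * bumpDensity (ε⁻¹ * (p.1 - p.2)))) (by fun_prop)) hg]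
  refine lintegral_congr fun z => ?_
  rw [lintegral_mul_const _ (by fun_prop)]
  rfl

/-- A measure with a bounded, nonnegative, smooth density. -/
def HasBoundedSmoothDensity (μ : Measure ℝ) : Prop :=
  ∃ f : ℝ → ℝ, ContDiff ℝ (⊤ : ℕ∞) f ∧ (∃ M : ℝ, ∀ x, |f x| ≤ M) ∧ (∀ x, 0 ≤ f x) ∧
    μ = volume.withDensity (fun x => ENNReal.ofReal (f x))

lemma hasBoundedSmoothDensity_mollify (m : Measure ℝ) [IsProbabilityMeasure m] {ε : ℝ}
    (hε : 0 < ε) : HasBoundedSmoothDensity (mollify m ε) := by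
  obtain ⟨K, hK0, hK⟩ := exists_bumpDensity_le
  have h0 (z : ℝ) : 0 ≤ ∫ x, ε⁻¹ * bumpDensity (ε⁻¹ * (z - x)) ∂m :=
    integral_nonneg fun x => mul_nonneg (by positivity) (bumpDensity_nonneg _)
  refine ⟨_, ?_, ⟨ε⁻¹ * K, fun z => ?_⟩, h0, mollify_eq_withDensity m hε⟩
  · have hs : HasCompactSupport fun y => ε⁻¹ * bumpDensity (ε⁻¹ * y) :=
      (hasCompactSupport_bumpDensity.comp_homeomorph
        (Homeomorph.mulLeft₀ ε⁻¹ (by positivity))).mul_left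
    have hd : ContDiff ℝ (⊤ : ℕ∞) fun y => ε⁻¹ * bumpDensity (ε⁻¹ * y) :=
      contDiff_const.mul (contDiff_bumpDensity.comp (contDiff_const.mul contDiff_id))
    have := hs.contDiff_convolution_right (ContinuousLinearMap.mul ℝ ℝ) (μ := m)
      (f := fun _ => (1 : ℝ)) (locallyIntegrable_const 1) hd
    convert this using 2 with z
    simp [convolution]
  · rw [abs_of_nonneg (h0 z)]
    refine (integral_mono_of_nonneg (ae_of_all _ fun x =>
      mul_nonneg (by positivity) (bumpDensity_nonneg _)) (integrable_const (ε⁻¹ * K))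
      (ae_of_all _ fun x => ?_)).trans_eq (by simp)
    have := hK (ε⁻¹ * (z - x))
    dsimp only
    gcongr

namespace HasBoundedSmoothDensity

lemma add {μ ν : Measure ℝ} (hμ : HasBoundedSmoothDensity μ) (hν : HasBoundedSmoothDensity ν) :
    HasBoundedSmoothDensity (μ + ν) := by
  obtain ⟨f, hf, ⟨M, hM⟩, hf0, rfl⟩ := hμ
  obtain ⟨g, hg, ⟨N, hN⟩, hg0, rfl⟩ := hν
  refine ⟨fun x => f x + g x, hf.add hg,
    ⟨M + N, fun x => (abs_add_le _ _).trans (add_le_add (hM x) (hN x))⟩,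
    fun x => add_nonneg (hf0 x) (hg0 x), ?_⟩
  have := hf.continuous
  simp_rw [ENNReal.ofReal_add (hf0 _) (hg0 _)]
  exact (withDensity_add_left (by fun_prop) _).symm

lemma smul {μ : Measure ℝ} (hμ : HasBoundedSmoothDensity μ) {c : ℝ} (hc : 0 ≤ c) :
    HasBoundedSmoothDensity (ENNReal.ofReal c • μ) := by
  obtain ⟨f, hf, ⟨M, hM⟩, hf0, rfl⟩ := hμ
  refine ⟨fun x => c * f x, contDiff_const.mul hf, ⟨c * M, fun x => ?_⟩,
    fun x => mul_nonneg hc (hf0 x), ?_⟩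
  · rw [abs_mul, abs_of_nonneg hc]
    gcongr
    exact hM x
  have := hf.continuous
  simp_rw [ENNReal.ofReal_mul hc]
  exact (withDensity_smul _ (by fun_prop)).symm

lemma map_add_right {μ : Measure ℝ} (hμ : HasBoundedSmoothDensity μ) (R : ℝ) :
    HasBoundedSmoothDensity (μ.map (· + R)) := by
  obtain ⟨f, hf, ⟨M, hM⟩, hf0, rfl⟩ := hμ
  have hc := hf.continuous
  refine ⟨fun x => f (x - R), hf.comp (contDiff_id.sub contDiff_const), ⟨M, fun x => hM _⟩,
    fun x => hf0 _, Measure.ext_of_lintegral _ fun g hg => ?_⟩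
  rw [lintegral_map hg (by fun_prop),
    lintegral_withDensity_eq_lintegral_mul _ (by fun_prop) (by fun_prop),
    lintegral_withDensity_eq_lintegral_mul _ (by fun_prop) hg,
    ← lintegral_sub_right_eq_self _ R]
  simp

lemma exists_le {μ : Measure ℝ} (hμ : HasBoundedSmoothDensity μ) :
    ∃ M : ℝ≥0∞, M ≠ ⊤ ∧ μ ≤ M • volume := by
  obtain ⟨f, -, ⟨M, hM⟩, -, rfl⟩ := hμ
  exact ⟨ENNReal.ofReal M, ENNReal.ofReal_ne_top,
    withDensity_ofReal_le fun x => (le_abs_self _).trans (hM x)⟩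

lemma measure_singleton {μ : Measure ℝ} (hμ : HasBoundedSmoothDensity μ) (x : ℝ) :
    μ {x} = 0 := by
  obtain ⟨f, -, -, -, rfl⟩ := hμ
  exact MeasureTheory.measure_singleton x

end HasBoundedSmoothDensity

lemma integrable_id_of_integrable_sq {μ : Measure ℝ} [IsFiniteMeasure μ]
    (h : Integrable (fun x => x ^ 2) μ) : Integrable (fun x => x) μ := by
  refine ((integrable_const (1 : ℝ)).add h).mono' (by fun_prop) (ae_of_all _ fun x => ?_)
  simp only [Pi.add_apply, Real.norm_eq_abs]
  nlinarith [sq_abs x, sq_nonneg (|x| - 1)]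

lemma ae_prod_fst_sub_snd_ne_zero {μ ν : Measure ℝ} [SFinite μ] [SFinite ν]
    (hν : ∀ x, ν {x} = 0) : ∀ᵐ p : ℝ × ℝ ∂(μ.prod ν), p.1 - p.2 ≠ 0 := by
  have hs : MeasurableSet {p : ℝ × ℝ | p.1 - p.2 ≠ 0}ᶜ :=
    ((measurableSet_singleton (0 : ℝ)).compl.preimage (by fun_prop)).compl
  rw [ae_iff, ← Set.compl_ofPred, Measure.prod_apply hs]
  refine (lintegral_congr fun x => ?_).trans lintegral_zero
  convert hν x using 2
  ext y
  simp [sub_eq_zero, eq_comm]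

lemma ae_bumpMeasure_prod_abs_sub_le :
    ∀ᵐ w : ℝ × ℝ ∂(bumpMeasure.prod bumpMeasure), |w.1 - w.2| ≤ 2 := by
  have h1 : ∀ᵐ w : ℝ × ℝ ∂(bumpMeasure.prod bumpMeasure), |w.1| ≤ 1 :=
    Measure.quasiMeasurePreserving_fst.ae ae_bumpMeasure_abs_le
  have h2 : ∀ᵐ w : ℝ × ℝ ∂(bumpMeasure.prod bumpMeasure), |w.2| ≤ 1 :=
    Measure.quasiMeasurePreserving_snd.ae ae_bumpMeasure_abs_le
  filter_upwards [h1, h2] with w hw1 hw2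
  linarith [abs_sub w.1 w.2]

lemma integrable_sq_mollify {m : Measure ℝ} [IsProbabilityMeasure m]
    (hm : Integrable (fun x => x ^ 2) m) (ε : ℝ) :
    Integrable (fun x => x ^ 2) (mollify m ε) := by
  rw [mollify, integrable_map_measure (by fun_prop) (by fun_prop)]
  have h1 : ∀ᵐ p : ℝ × ℝ ∂(m.prod bumpMeasure), |p.2| ≤ 1 :=
    Measure.quasiMeasurePreserving_snd.ae ae_bumpMeasure_abs_le
  refine (((hm.comp_fst bumpMeasure).const_mul 2).add
    (integrable_const (2 * ε ^ 2))).mono' (by fun_prop) ?_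
  filter_upwards [h1] with p hp
  have h2 : p.2 ^ 2 ≤ 1 := (sq_le_one_iff_abs_le_one _).2 hp
  simp only [Function.comp_apply, Pi.add_apply, Real.norm_eq_abs, abs_pow, sq_abs]
  nlinarith [sq_nonneg (p.1 - ε * p.2), mul_le_mul_of_nonneg_left h2 (sq_nonneg ε)]

lemma tendsto_integral_mollify (m : Measure ℝ) [IsProbabilityMeasure m]
    (g : BoundedContinuousFunction ℝ ℝ) :
    Tendsto (fun ε => ∫ x, g x ∂(mollify m ε)) (𝓝 0) (𝓝 (∫ x, g x ∂m)) := by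
  have hg := g.continuous
  have h1 (ε : ℝ) : ∫ x, g x ∂(mollify m ε)
      = ∫ p : ℝ × ℝ, g (p.1 + ε * p.2) ∂(m.prod bumpMeasure) :=
    integral_map (by fun_prop) (by fun_prop)
  have h2 : ∫ x, g x ∂m = ∫ p : ℝ × ℝ, g p.1 ∂(m.prod bumpMeasure) := by
    rw [integral_fun_fst (fun x => g x)]; simp
  simp_rw [h1, h2]
  refine tendsto_integral_filter_of_dominated_convergence (fun _ => ‖g‖)
    (Eventually.of_forall fun ε => by fun_prop)
    (Eventually.of_forall fun ε => ae_of_all _ fun p => g.norm_coe_le_norm _)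
    (integrable_const _) (ae_of_all _ fun p => ?_)
  have : Continuous fun ε : ℝ => g (p.1 + ε * p.2) := by fun_prop
  simpa using this.tendsto 0

lemma mollify_prod_mollify (m : Measure ℝ) [IsProbabilityMeasure m] (ε : ℝ) :
    (mollify m ε).prod (mollify m ε) =
      ((m.prod m).prod (bumpMeasure.prod bumpMeasure)).map
        fun ω => (ω.1.1 + ε * ω.2.1, ω.1.2 + ε * ω.2.2) := by
  refine Measure.ext_of_lintegral _ fun g hg => ?_
  rw [mollify, Measure.map_prod_map _ _ (by fun_prop) (by fun_prop),
    lintegral_map hg (by fun_prop), lintegral_map hg (by fun_prop),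
    lintegral_prod _ (by fun_prop), lintegral_prod (fun p : ℝ × ℝ => ∫⁻ q : ℝ × ℝ,
      g (Prod.map (fun p : ℝ × ℝ => p.1 + ε * p.2) (fun p : ℝ × ℝ => p.1 + ε * p.2) (p, q))
        ∂(m.prod bumpMeasure))
      (Measurable.lintegral_prod_right' (f := fun r : (ℝ × ℝ) × (ℝ × ℝ) =>
        g (Prod.map (fun p : ℝ × ℝ => p.1 + ε * p.2) (fun p : ℝ × ℝ => p.1 + ε * p.2) r))
        (by fun_prop)).aemeasurable]
  conv_rhs => rw [lintegral_prod _ (by fun_prop), lintegral_prod (fun p : ℝ × ℝ =>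
    ∫⁻ q : ℝ × ℝ, g (p.1 + ε * q.1, p.2 + ε * q.2) ∂(bumpMeasure.prod bumpMeasure))
    (Measurable.lintegral_prod_right' (f := fun r : (ℝ × ℝ) × (ℝ × ℝ) =>
      g (r.1.1 + ε * r.2.1, r.1.2 + ε * r.2.2)) (by fun_prop)).aemeasurable]
  refine lintegral_congr fun x => ?_
  have h1 (u : ℝ) : ∫⁻ q : ℝ × ℝ, g (Prod.map (fun p : ℝ × ℝ => p.1 + ε * p.2)
      (fun p : ℝ × ℝ => p.1 + ε * p.2) ((x, u), q)) ∂(m.prod bumpMeasure)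
      = ∫⁻ y, ∫⁻ v, g (x + ε * u, y + ε * v) ∂bumpMeasure ∂m :=
    lintegral_prod _ (by fun_prop)
  have h2 (y : ℝ) : ∫⁻ q : ℝ × ℝ, g (x + ε * q.1, y + ε * q.2)
      ∂(bumpMeasure.prod bumpMeasure)
      = ∫⁻ u, ∫⁻ v, g (x + ε * u, y + ε * v) ∂bumpMeasure ∂bumpMeasure :=
    lintegral_prod _ (by fun_prop)
  simp_rw [h1, h2]
  exact lintegral_lintegral_swap (Measurable.lintegral_prod_right'
    (f := fun q : (ℝ × ℝ) × ℝ => g (x + ε * q.1.1, q.1.2 + ε * q.2)) (by fun_prop)).aemeasurable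

lemma log_sub_log_le_of_abs {a b r : ℝ} (hr : 0 < r) (ha : r ≤ a) (hb : 0 < b) :
    Real.log b - Real.log a ≤ |b - a| / r := by
  have ha0 : 0 < a := hr.trans_le ha
  have h1 := Real.log_le_sub_one_of_pos (div_pos hb ha0)
  rw [Real.log_div hb.ne' ha0.ne'] at h1
  calc Real.log b - Real.log a ≤ b / a - 1 := h1
    _ = (b - a) / a := by field_simp
    _ ≤ |b - a| / a := by gcongr; exact le_abs_self _
    _ ≤ |b - a| / r := by gcongr

/-- A small perturbation of the argument changes the logarithm little. -/
lemma abs_log_add_sub_log_le_of_le {t ε w : ℝ} (hε : 0 < ε) (ht : 4 * ε ≤ |t|) (hw : |w| ≤ 2) :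
    |Real.log |t + ε * w| - Real.log (abs t)| ≤ 4 * ε / |t| := by
  have h0 : |ε * w| ≤ 2 * ε := by
    rw [abs_mul, abs_of_pos hε]; nlinarith
  have h1 : |(|t + ε * w| - |t|)| ≤ 2 * ε := by
    have := abs_abs_sub_abs_le_abs_sub (t + ε * w) t
    rw [add_sub_cancel_left] at this
    exact this.trans h0
  have htp : 0 < |t| := by linarith
  have h2 : |t| / 2 ≤ |t + ε * w| := by linarith [(abs_le.1 h1).1]
  have e : 4 * ε / |t| = 2 * ε / (|t| / 2) := by field_simp; norm_num
  rw [e, abs_sub_le_iff]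
  constructor
  · refine (log_sub_log_le_of_abs (r := |t| / 2) (by positivity) (by linarith) (by linarith)).trans ?_
    exact div_le_div_of_nonneg_right h1 (by positivity)
  · refine (log_sub_log_le_of_abs (r := |t| / 2) (by positivity) h2 htp).trans ?_
    rw [abs_sub_comm]
    exact div_le_div_of_nonneg_right h1 (by positivity)

lemma abs_log_add_sub_log_le {t ε w : ℝ} (hε : 0 < ε) (hε1 : ε ≤ 1) (ht : t ≠ 0)
    (hw : |w| ≤ 2) :
    |Real.log |t + ε * w| - Real.log (abs t)|
      ≤ 8 + |Real.log (abs t)| + max 0 (-Real.log |w + t / ε|) := by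
  have hm : 0 ≤ max 0 (-Real.log |w + t / ε|) := le_max_left _ _
  have htp : 0 < |t| := abs_pos.2 ht
  rcases le_or_gt (4 * ε) |t| with h | h
  · have h1 := abs_log_add_sub_log_le_of_le hε h hw
    have h2 : 4 * ε / |t| ≤ 1 := (div_le_one htp).2 h
    linarith [abs_nonneg (Real.log |t|)]
  have e : t + ε * w = ε * (w + t / ε) := by field_simp; ring
  rcases eq_or_ne (w + t / ε) 0 with h0 | h0
  · rw [e, h0]
    simp only [mul_zero, abs_zero, Real.log_zero, zero_sub, abs_neg, neg_zero, max_self]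
    linarith
  have hlog : Real.log |t + ε * w| = Real.log ε + Real.log |w + t / ε| := by
    rw [e, abs_mul, abs_of_pos hε, Real.log_mul hε.ne' (abs_ne_zero.2 h0)]
  have h4 : Real.log 4 ≤ 3 := by
    linarith [Real.log_le_sub_one_of_pos (show (0 : ℝ) < 4 by norm_num)]
  have h5 : Real.log |t| ≤ Real.log 4 + Real.log ε := by
    rw [← Real.log_mul (by norm_num) hε.ne']
    exact Real.log_le_log htp h.le
  have h6 : Real.log ε ≤ 0 := Real.log_nonpos hε.le hε1
  have h7 : Real.log |w + t / ε| ≤ 5 := by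
    have h8 : |t / ε| ≤ 4 := by
      rw [abs_div, abs_of_pos hε, div_le_iff₀ hε]; exact h.le
    have := Real.log_le_sub_one_of_pos (abs_pos.2 h0)
    linarith [abs_add_le w (t / ε)]
  have h9 := le_max_right 0 (-Real.log |w + t / ε|)
  have h10 := neg_abs_le (Real.log |t|)
  rw [hlog, abs_le]
  constructor <;> linarith [le_abs_self (Real.log |t|)]

/-- Averaging over the mollifier: domination of the perturbed logarithm. -/
lemma exists_lintegral_abs_log_add_sub_log_le : ∃ C : ℝ≥0∞, C ≠ ⊤ ∧
    ∀ t ε : ℝ, 0 < ε → ε ≤ 1 → t ≠ 0 →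
      ∫⁻ w : ℝ × ℝ, ‖Real.log |t + ε * (w.1 - w.2)| - Real.log |t|‖ₑ
          ∂(bumpMeasure.prod bumpMeasure)
        ≤ ENNReal.ofReal (8 + |Real.log (abs t)|) + C := by
  obtain ⟨K, hK0, hK⟩ := exists_bumpDensity_le
  refine ⟨ENNReal.ofReal K * ∫⁻ s : ℝ, ENNReal.ofReal (-Real.log |s|),
    ENNReal.mul_ne_top ENNReal.ofReal_ne_top lintegral_neg_log_abs_ne_top,
    fun t ε hε hε1 ht => ?_⟩
  calc _ ≤ ∫⁻ w : ℝ × ℝ, (ENNReal.ofReal (8 + |Real.log (abs t)|)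
          + ENNReal.ofReal (-Real.log |w.1 - (w.2 - t / ε)|))
            ∂(bumpMeasure.prod bumpMeasure) := by
        refine lintegral_mono_ae ?_
        filter_upwards [ae_bumpMeasure_prod_abs_sub_le] with w hw
        rw [← ofReal_norm, Real.norm_eq_abs]
        refine (ENNReal.ofReal_le_ofReal (abs_log_add_sub_log_le hε hε1 ht hw)).trans ?_
        refine ENNReal.ofReal_add_le.trans_eq ?_
        rw [ENNReal.ofReal_max, ENNReal.ofReal_zero, max_eq_right zero_le, sub_sub_eq_add_sub,
          add_sub_right_comm]
    _ ≤ _ := by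
        rw [lintegral_add_left (by fun_prop), lintegral_const, measure_univ, mul_one,
          lintegral_prod_symm _ (by fun_prop)]
        gcongr
        refine (lintegral_mono fun v =>
          lintegral_neg_log_abs_sub_le (withDensity_ofReal_le hK) (v - t / ε)).trans ?_
        rw [lintegral_const, measure_univ, mul_one]

lemma tendsto_lintegral_log_add_sub_log {t : ℝ} (ht : t ≠ 0) :
    Tendsto (fun ε => ∫⁻ w : ℝ × ℝ, ‖Real.log |t + ε * (w.1 - w.2)| - Real.log |t|‖ₑ
      ∂(bumpMeasure.prod bumpMeasure)) (𝓝[>] 0) (𝓝 0) := by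
  have htp : 0 < |t| := abs_pos.2 ht
  have h1 : Tendsto (fun ε : ℝ => ENNReal.ofReal (4 * ε / |t|)) (𝓝[>] 0) (𝓝 0) := by
    have : Continuous fun ε : ℝ => ENNReal.ofReal (4 * ε / |t|) :=
      ENNReal.continuous_ofReal.comp (by fun_prop)
    simpa using (this.tendsto 0).mono_left nhdsWithin_le_nhds
  refine tendsto_of_tendsto_of_tendsto_of_le_of_le' tendsto_const_nhds h1
    (Eventually.of_forall fun _ => zero_le) ?_
  filter_upwards [Ioo_mem_nhdsGT (show (0 : ℝ) < |t| / 4 by positivity)] with ε hε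
  refine (lintegral_mono_ae (g := fun _ => ENNReal.ofReal (4 * ε / |t|)) ?_).trans (by simp)
  filter_upwards [ae_bumpMeasure_prod_abs_sub_le] with w hw
  rw [← ofReal_norm]
  exact ENNReal.ofReal_le_ofReal
    (abs_log_add_sub_log_le_of_le (t := t) hε.1 (by linarith [hε.2]) hw)

/-- For an atomless measure, mollification is continuous for the logarithmic energy. -/
lemma tendsto_integral_log_mollify {m : Measure ℝ} [IsProbabilityMeasure m]
    (hmom : Integrable (fun x => x ^ 2) m) (hatom : ∀ x, m {x} = 0)
    (hlog : Integrable (fun p : ℝ × ℝ => Real.log |p.1 - p.2|) (m.prod m)) :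
    Tendsto (fun ε => ∫ p : ℝ × ℝ, Real.log |p.1 - p.2| ∂((mollify m ε).prod (mollify m ε)))
      (𝓝[>] 0) (𝓝 (∫ p : ℝ × ℝ, Real.log |p.1 - p.2| ∂(m.prod m))) := by
  have hmeas := measurable_log_abs_sub
  have e1 : ∫ p : ℝ × ℝ, Real.log |p.1 - p.2| ∂(m.prod m)
      = ∫ ω : (ℝ × ℝ) × (ℝ × ℝ), Real.log |ω.1.1 - ω.1.2|
        ∂((m.prod m).prod (bumpMeasure.prod bumpMeasure)) := by
    rw [integral_fun_fst (fun p : ℝ × ℝ => Real.log |p.1 - p.2|)]; simp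
  have e2 (ε : ℝ) : ∫ p : ℝ × ℝ, Real.log |p.1 - p.2| ∂((mollify m ε).prod (mollify m ε))
      = ∫ ω : (ℝ × ℝ) × (ℝ × ℝ), Real.log |(ω.1.1 + ε * ω.2.1) - (ω.1.2 + ε * ω.2.2)|
        ∂((m.prod m).prod (bumpMeasure.prod bumpMeasure)) := by
    rw [mollify_prod_mollify, integral_map (by fun_prop) hmeas.aestronglyMeasurable]
  simp_rw [e1, e2]
  refine tendsto_integral_of_L1 _ (hmeas.comp measurable_fst).aestronglyMeasurable ?_ ?_
  · filter_upwards [self_mem_nhdsWithin] with ε hε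
    obtain ⟨M, hM, hle⟩ := (hasBoundedSmoothDensity_mollify m hε).exists_le
    have hid := integrable_id_of_integrable_sq (integrable_sq_mollify hmom ε)
    have h := integrable_log_abs_sub hM hle hid hid
    rwa [mollify_prod_mollify, integrable_map_measure hmeas.aestronglyMeasurable
      (by fun_prop)] at h
  · obtain ⟨C, hC, hbound⟩ := exists_lintegral_abs_log_add_sub_log_le
    have e3 (ε : ℝ) : ∫⁻ ω : (ℝ × ℝ) × (ℝ × ℝ),
          ‖Real.log |(ω.1.1 + ε * ω.2.1) - (ω.1.2 + ε * ω.2.2)| - Real.log |ω.1.1 - ω.1.2|‖ₑ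
          ∂((m.prod m).prod (bumpMeasure.prod bumpMeasure))
        = ∫⁻ p : ℝ × ℝ, ∫⁻ w : ℝ × ℝ,
          ‖Real.log |(p.1 - p.2) + ε * (w.1 - w.2)| - Real.log |p.1 - p.2|‖ₑ
          ∂(bumpMeasure.prod bumpMeasure) ∂(m.prod m) := by
      rw [lintegral_prod _ (by fun_prop)]
      refine lintegral_congr fun p => lintegral_congr fun w => ?_
      dsimp only
      congr 4
      ring
    refine (tendsto_congr e3).2 ?_
    rw [← lintegral_zero (μ := m.prod m)]
    have hne := ae_prod_fst_sub_snd_ne_zero (μ := m) hatom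
    refine tendsto_lintegral_filter_of_dominated_convergence
      (fun p => ENNReal.ofReal (8 + |Real.log (abs (p.1 - p.2))|) + C) ?_ ?_ ?_ ?_
    · exact Eventually.of_forall fun ε => Measurable.lintegral_prod_right'
        (f := fun ω : (ℝ × ℝ) × (ℝ × ℝ) =>
          ‖Real.log |(ω.1.1 - ω.1.2) + ε * (ω.2.1 - ω.2.2)| - Real.log |ω.1.1 - ω.1.2|‖ₑ)
        (by fun_prop)
    · filter_upwards [Ioc_mem_nhdsGT (show (0 : ℝ) < 1 by norm_num)] with ε hε
      filter_upwards [hne] with p hp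
      exact hbound _ ε hε.1 hε.2 hp
    · rw [lintegral_add_right _ measurable_const, lintegral_const, measure_univ, mul_one]
      exact ENNReal.add_ne_top.2 ⟨((integrable_const (8 : ℝ)).add hlog.abs).lintegral_lt_top.ne, hC⟩
    · filter_upwards [hne] with p hp
      exact tendsto_lintegral_log_add_sub_log hp
/-- A concentrated atomless measure has small logarithmic energy. -/
lemma integral_log_abs_sub_le_of_closedBall {ν : Measure ℝ} [IsProbabilityMeasure ν]
    (hatom : ∀ x, ν {x} = 0) (hν : Integrable (fun x => x) ν)
    (hlog : Integrable (fun p : ℝ × ℝ => Real.log |p.1 - p.2|) (ν.prod ν)) (a ε : ℝ) :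
    ∫ p : ℝ × ℝ, Real.log |p.1 - p.2| ∂(ν.prod ν)
      ≤ 2 * ∫ x, |x| ∂ν + ν.real (Metric.closedBall a ε) ^ 2 * Real.log (2 * ε) := by
  set B := Metric.closedBall a ε
  have hB : MeasurableSet (B ×ˢ B) := measurableSet_closedBall.prod measurableSet_closedBall
  have i1 : Integrable (fun p : ℝ × ℝ => |p.1|) (ν.prod ν) := hν.abs.comp_fst ν
  have i2 : Integrable (fun p : ℝ × ℝ => |p.2|) (ν.prod ν) := hν.abs.comp_snd ν
  have i12 : Integrable (fun p : ℝ × ℝ => |p.1| + |p.2|) (ν.prod ν) := i1.add i2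
  have i3 : Integrable ((B ×ˢ B).indicator fun _ : ℝ × ℝ => Real.log (2 * ε)) (ν.prod ν) :=
    (integrable_const _).indicator hB
  have hle : ∫ p : ℝ × ℝ, Real.log |p.1 - p.2| ∂(ν.prod ν)
      ≤ ∫ p : ℝ × ℝ, (|p.1| + |p.2| + (B ×ˢ B).indicator (fun _ => Real.log (2 * ε)) p)
        ∂(ν.prod ν) := by
    refine integral_mono_ae hlog (i12.add i3) ?_
    filter_upwards [ae_prod_fst_sub_snd_ne_zero (μ := ν) hatom] with p hp
    by_cases h : p ∈ B ×ˢ B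
    · simp only [Set.indicator_of_mem h]
      have h1 := (Real.closedBall_eq_Icc ▸ h.1 : p.1 ∈ Set.Icc (a - ε) (a + ε))
      have h2 := (Real.closedBall_eq_Icc ▸ h.2 : p.2 ∈ Set.Icc (a - ε) (a + ε))
      have h3 : |p.1 - p.2| ≤ 2 * ε :=
        abs_le.2 ⟨by linarith [h1.1, h2.2], by linarith [h1.2, h2.1]⟩
      have := Real.log_le_log (abs_pos.2 hp) h3
      linarith [abs_nonneg p.1, abs_nonneg p.2]
    · simp only [Set.indicator_of_notMem h, add_zero]
      exact log_abs_sub_le _ _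
  refine hle.trans_eq ?_
  rw [integral_add i12 i3, integral_add i1 i2, integral_indicator_const _ hB,
    integral_fun_fst (fun x : ℝ => |x|), integral_fun_snd (fun x : ℝ => |x|),
    measureReal_prod_prod]
  simp
  ring

lemma le_mollify_real_closedBall (m : Measure ℝ) [IsProbabilityMeasure m] (a : ℝ) {ε : ℝ}
    (hε : 0 ≤ ε) : m.real {a} ≤ (mollify m ε).real (Metric.closedBall a ε) := by
  refine ENNReal.toReal_mono (measure_ne_top _ _) ?_
  rw [mollify, Measure.map_apply (by fun_prop) measurableSet_closedBall]
  calc m {a} = (m.prod bumpMeasure) ({a} ×ˢ Set.univ) := by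
        rw [Measure.prod_prod, measure_univ, mul_one]
    _ ≤ _ := by
        refine measure_mono_ae ?_
        have h1 : ∀ᵐ p : ℝ × ℝ ∂(m.prod bumpMeasure), |p.2| ≤ 1 :=
          Measure.quasiMeasurePreserving_snd.ae ae_bumpMeasure_abs_le
        filter_upwards [h1] with p hp hpa
        have h2 : p.1 = a := hpa.1
        change p.1 + ε * p.2 ∈ Metric.closedBall a ε
        rw [Metric.mem_closedBall, Real.dist_eq, h2, add_sub_cancel_left, abs_mul,
          abs_of_nonneg hε]
        exact mul_le_of_le_one_right hε hp

lemma integral_abs_mollify_le {m : Measure ℝ} [IsProbabilityMeasure m]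
    (hm : Integrable (fun x => x) m) {ε : ℝ} (hε : 0 ≤ ε) :
    ∫ x, |x| ∂(mollify m ε) ≤ ∫ x, |x| ∂m + ε := by
  rw [mollify, integral_map (by fun_prop) (by fun_prop)]
  have h1 : ∀ᵐ p : ℝ × ℝ ∂(m.prod bumpMeasure), |p.2| ≤ 1 :=
    Measure.quasiMeasurePreserving_snd.ae ae_bumpMeasure_abs_le
  have i1 : Integrable (fun p : ℝ × ℝ => |p.1|) (m.prod bumpMeasure) :=
    hm.abs.comp_fst bumpMeasure
  calc ∫ p : ℝ × ℝ, |p.1 + ε * p.2| ∂(m.prod bumpMeasure)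
      ≤ ∫ p : ℝ × ℝ, (|p.1| + ε) ∂(m.prod bumpMeasure) := by
        refine integral_mono_of_nonneg (ae_of_all _ fun p => abs_nonneg _)
          (i1.add (integrable_const _)) ?_
        filter_upwards [h1] with p hp
        refine (abs_add_le _ _).trans (add_le_add le_rfl ?_)
        rw [abs_mul, abs_of_nonneg hε]
        exact mul_le_of_le_one_right hε hp
    _ = _ := by
        rw [integral_add i1 (integrable_const _), integral_fun_fst (fun x : ℝ => |x|)]
        simp

/-- In the presence of an atom, the energy of the mollified measures diverges to `-∞`. -/
lemma tendsto_integral_log_mollify_atBot {m : Measure ℝ} [IsProbabilityMeasure m]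
    (hmom : Integrable (fun x => x ^ 2) m) {a : ℝ} (ha : m {a} ≠ 0) :
    Tendsto (fun ε => ∫ p : ℝ × ℝ, Real.log |p.1 - p.2| ∂((mollify m ε).prod (mollify m ε)))
      (𝓝[>] 0) atBot := by
  have hα : 0 < m.real {a} := ENNReal.toReal_pos ha (measure_ne_top _ _)
  have h1 : Tendsto (fun ε : ℝ => 2 * ε) (𝓝[>] 0) (𝓝[>] 0) := by
    refine tendsto_nhdsWithin_iff.2 ⟨?_, ?_⟩
    · have : Continuous fun ε : ℝ => 2 * ε := by fun_prop
      simpa using (this.tendsto 0).mono_left nhdsWithin_le_nhds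
    · filter_upwards [self_mem_nhdsWithin] with ε hε
      exact mul_pos two_pos (Set.mem_Ioi.1 hε)
  have h2 : Tendsto (fun ε : ℝ => 2 * (∫ x, |x| ∂m + 1) + m.real {a} ^ 2 * Real.log (2 * ε))
      (𝓝[>] 0) atBot :=
    tendsto_atBot_add_const_left _ _
      ((Real.tendsto_log_nhdsGT_zero.comp h1).const_mul_atBot (by positivity))
  refine tendsto_atBot_mono' _ ?_ h2
  filter_upwards [Ioc_mem_nhdsGT (show (0 : ℝ) < 1 / 2 by norm_num)] with ε hε
  have hd := hasBoundedSmoothDensity_mollify m hε.1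
  obtain ⟨M, hM, hle⟩ := hd.exists_le
  have hid := integrable_id_of_integrable_sq (integrable_sq_mollify hmom ε)
  have h3 := integral_log_abs_sub_le_of_closedBall hd.measure_singleton hid
    (integrable_log_abs_sub hM hle hid hid) a ε
  have h4 := integral_abs_mollify_le (integrable_id_of_integrable_sq hmom) hε.1.le
  have h5 := le_mollify_real_closedBall m a hε.1.le
  have h6 : Real.log (2 * ε) ≤ 0 :=
    Real.log_nonpos (by linarith [hε.1]) (by linarith [hε.2])
  have h7 := mul_le_mul_of_nonpos_right (pow_le_pow_left₀ hα.le h5 2) h6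
  linarith [hε.2]

/-- The mixture moving a proportion `δ` of the mass of `ν` by `R`. -/
noncomputable def shiftMixture (ν : Measure ℝ) (δ R : ℝ) : Measure ℝ :=
  ENNReal.ofReal (1 - δ) • ν + ENNReal.ofReal δ • ν.map (· + R)

lemma HasBoundedSmoothDensity.shiftMixture {ν : Measure ℝ}
    (hν : HasBoundedSmoothDensity ν) {δ : ℝ} (h0 : 0 ≤ δ) (h1 : δ ≤ 1) (R : ℝ) :
    HasBoundedSmoothDensity (shiftMixture ν δ R) :=
  (hν.smul (sub_nonneg.2 h1)).add ((hν.map_add_right R).smul h0)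

section shiftMixture

variable {ν : Measure ℝ} [IsProbabilityMeasure ν]

instance (R : ℝ) : IsProbabilityMeasure (ν.map (· + R)) :=
  Measure.isProbabilityMeasure_map (by fun_prop)

lemma isProbabilityMeasure_shiftMixture {δ : ℝ} (h0 : 0 ≤ δ) (h1 : δ ≤ 1) (R : ℝ) :
    IsProbabilityMeasure (shiftMixture ν δ R) := by
  constructor
  simp [shiftMixture, ← ENNReal.ofReal_add (sub_nonneg.2 h1) h0]

lemma integrable_sq_map_add_right (h : Integrable (fun x => x ^ 2) ν) (R : ℝ) :
    Integrable (fun x => x ^ 2) (ν.map (· + R)) := by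
  rw [integrable_map_measure (by fun_prop) (by fun_prop)]
  refine ((h.const_mul 2).add (integrable_const (2 * R ^ 2))).mono' (by fun_prop)
    (ae_of_all _ fun x => ?_)
  simp only [Function.comp_apply, Pi.add_apply, Real.norm_eq_abs, abs_pow, sq_abs]
  nlinarith [sq_nonneg (x - R)]

lemma integrable_sq_shiftMixture (h : Integrable (fun x => x ^ 2) ν) (δ R : ℝ) :
    Integrable (fun x => x ^ 2) (shiftMixture ν δ R) :=
  (h.smul_measure ENNReal.ofReal_ne_top).add_measure
    ((integrable_sq_map_add_right h R).smul_measure ENNReal.ofReal_ne_top)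

lemma abs_integral_shiftMixture_sub_le {δ : ℝ} (h0 : 0 ≤ δ) (h1 : δ ≤ 1) (R : ℝ)
    (g : BoundedContinuousFunction ℝ ℝ) :
    |∫ x, g x ∂(shiftMixture ν δ R) - ∫ x, g x ∂ν| ≤ δ * (2 * ‖g‖) := by
  have e : ∫ x, g x ∂(shiftMixture ν δ R)
      = (1 - δ) * ∫ x, g x ∂ν + δ * ∫ x, g x ∂(ν.map (· + R)) := by
    rw [shiftMixture, integral_add_measure ((g.integrable ν).smul_measure ENNReal.ofReal_ne_top)
      ((g.integrable _).smul_measure ENNReal.ofReal_ne_top), integral_smul_measure,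
      integral_smul_measure, ENNReal.toReal_ofReal h0, ENNReal.toReal_ofReal (sub_nonneg.2 h1)]
    rfl
  have h2 := g.norm_integral_le_norm ν
  have h3 := g.norm_integral_le_norm (ν.map (· + R))
  rw [Real.norm_eq_abs] at h2 h3
  rw [e, show ∀ A B : ℝ, (1 - δ) * A + δ * B - A = δ * (B - A) by intros; ring, abs_mul,
    abs_of_nonneg h0]
  gcongr
  exact (abs_sub _ _).trans (by linarith)

lemma integral_log_map_add_right_prod (R : ℝ) :
    ∫ p : ℝ × ℝ, Real.log |p.1 - p.2| ∂((ν.map (· + R)).prod (ν.map (· + R)))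
      = ∫ p : ℝ × ℝ, Real.log |p.1 - p.2| ∂(ν.prod ν) := by
  rw [Measure.map_prod_map _ _ (by fun_prop) (by fun_prop), integral_map (by fun_prop)
    measurable_log_abs_sub.aestronglyMeasurable]
  simp

lemma integral_log_shiftMixture (hd : HasBoundedSmoothDensity ν)
    (hν : Integrable (fun x => x ^ 2) ν) {δ : ℝ} (h0 : 0 ≤ δ) (h1 : δ ≤ 1) (R : ℝ) :
    ∫ p : ℝ × ℝ, Real.log |p.1 - p.2| ∂((shiftMixture ν δ R).prod (shiftMixture ν δ R))
      = (1 - 2 * (δ * (1 - δ))) * ∫ p : ℝ × ℝ, Real.log |p.1 - p.2| ∂(ν.prod ν)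
        + 2 * (δ * (1 - δ)) * ∫ p : ℝ × ℝ, Real.log |p.1 - p.2| ∂(ν.prod (ν.map (· + R))) := by
  have hid := integrable_id_of_integrable_sq hν
  have hidR := integrable_id_of_integrable_sq (integrable_sq_map_add_right hν R)
  obtain ⟨M, hM, hle⟩ := hd.exists_le
  obtain ⟨N, hN, hleR⟩ := (hd.map_add_right R).exists_le
  have i1 := integrable_log_abs_sub hM hle hid hid
  have i2 := integrable_log_abs_sub hM hle hid hidR
  have i3 := integrable_log_abs_sub hN hleR hidR hid
  have i4 := integrable_log_abs_sub hN hleR hidR hidR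
  have hswap : ∫ p : ℝ × ℝ, Real.log |p.1 - p.2| ∂((ν.map (· + R)).prod ν)
      = ∫ p : ℝ × ℝ, Real.log |p.1 - p.2| ∂(ν.prod (ν.map (· + R))) := by
    rw [← integral_prod_swap]
    simp_rw [Prod.fst_swap, Prod.snd_swap, abs_sub_comm]
  have j {μ : Measure (ℝ × ℝ)} {c d : ℝ} (h : Integrable (fun p : ℝ × ℝ =>
      Real.log |p.1 - p.2|) μ) : Integrable (fun p : ℝ × ℝ => Real.log |p.1 - p.2|)
        (ENNReal.ofReal c • ENNReal.ofReal d • μ) :=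
    (h.smul_measure ENNReal.ofReal_ne_top).smul_measure ENNReal.ofReal_ne_top
  rw [shiftMixture, Measure.prod_add, Measure.add_prod, Measure.add_prod]
  simp only [Measure.prod_smul_left, Measure.prod_smul_right]
  rw [integral_add_measure ((j i1).add_measure (j i3)) ((j i2).add_measure (j i4)),
    integral_add_measure (j i1) (j i3), integral_add_measure (j i2) (j i4)]
  simp only [integral_smul_measure, ENNReal.toReal_ofReal h0,
    ENNReal.toReal_ofReal (sub_nonneg.2 h1), hswap, integral_log_map_add_right_prod, smul_eq_mul]
  ring

/-- The interaction energy with a far translate grows at least logarithmically. -/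
lemma exists_log_sub_le_integral_log (hd : HasBoundedSmoothDensity ν)
    (hν : Integrable (fun x => x ^ 2) ν) : ∃ k : ℝ, ∀ R : ℝ, 0 < R →
      Real.log R - k ≤ ∫ p : ℝ × ℝ, Real.log |p.1 - p.2| ∂(ν.prod (ν.map (· + R))) := by
  have hid := integrable_id_of_integrable_sq hν
  obtain ⟨M, hM, hle⟩ := hd.exists_le
  set k₀ := M * ∫⁻ s : ℝ, ENNReal.ofReal (-Real.log |s|)
  have hk₀t : k₀ ≠ ⊤ := ENNReal.mul_ne_top hM lintegral_neg_log_abs_ne_top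
  refine ⟨2 * ∫ x, |x| ∂ν + k₀.toReal, fun R hR => ?_⟩
  have hidR := integrable_id_of_integrable_sq (integrable_sq_map_add_right hν R)
  have i0 := integrable_log_abs_sub hM hle hid hidR
  have i1 : Integrable (fun p : ℝ × ℝ => |p.1|) (ν.prod (ν.map (· + R))) :=
    hid.abs.comp_fst _
  have i2 : Integrable (fun p : ℝ × ℝ => |p.2 - R|) (ν.prod (ν.map (· + R))) :=
    (hidR.sub (integrable_const R)).abs.comp_snd _
  have i3 : Integrable (fun p : ℝ × ℝ => max 0 (-Real.log |p.1 - p.2|))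
      (ν.prod (ν.map (· + R))) :=
    i0.neg.pos_part.congr (ae_of_all _ fun p => max_comm _ _)
  have j1 : Integrable (fun p : ℝ × ℝ => Real.log R - |p.1|) (ν.prod (ν.map (· + R))) :=
    (integrable_const _).sub i1
  have j2 : Integrable (fun p : ℝ × ℝ => Real.log R - |p.1| - |p.2 - R|)
      (ν.prod (ν.map (· + R))) := j1.sub i2
  have e2 : ∫ p : ℝ × ℝ, |p.2 - R| ∂(ν.prod (ν.map (· + R))) = ∫ x, |x| ∂ν := by
    rw [integral_fun_snd (fun x : ℝ => |x - R|), integral_map (by fun_prop) (by fun_prop)]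
    simp
  have e3 : ∫ p : ℝ × ℝ, max 0 (-Real.log |p.1 - p.2|) ∂(ν.prod (ν.map (· + R)))
      ≤ k₀.toReal := by
    rw [integral_eq_lintegral_of_nonneg_ae (f := fun p : ℝ × ℝ => max 0 (-Real.log |p.1 - p.2|))
      (ae_of_all _ fun p => le_max_left _ _)
      i3.aestronglyMeasurable]
    refine ENNReal.toReal_mono hk₀t ?_
    have := lintegral_neg_log_abs_sub_prod_le (ν := ν.map (· + R)) hle
    rw [measure_univ, mul_one] at this
    simpa [ENNReal.ofReal_max, k₀] using this
  have hmono : ∫ p : ℝ × ℝ, (Real.log R - |p.1| - |p.2 - R| - max 0 (-Real.log |p.1 - p.2|))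
      ∂(ν.prod (ν.map (· + R)))
      ≤ ∫ p : ℝ × ℝ, Real.log |p.1 - p.2| ∂(ν.prod (ν.map (· + R))) := by
    refine integral_mono (j2.sub i3) i0 fun p => ?_
    dsimp only
    have h1 : R ≤ |p.1 - p.2| + (|p.1| + |p.2 - R|) := by
      have := abs_sub_abs_le_abs_sub R (p.2 - p.1)
      linarith [neg_abs_le (p.1 - p.2), le_abs_self p.1, neg_abs_le (p.2 - R)]
    set s := |p.1| + |p.2 - R| with hs
    have hs0 : 0 ≤ s := by positivity
    have h2 : R ≤ max 1 |p.1 - p.2| * (1 + s) := by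
      have := le_max_left 1 |p.1 - p.2|
      have := le_max_right 1 |p.1 - p.2|
      nlinarith
    have h3 : Real.log R ≤ Real.log (max 1 |p.1 - p.2|) + s := by
      have := Real.log_le_log hR h2
      rw [Real.log_mul (by positivity) (by positivity)] at this
      linarith [Real.log_le_sub_one_of_pos (show 0 < 1 + s by positivity)]
    have h4 : Real.log (max 1 |p.1 - p.2|) - max 0 (-Real.log |p.1 - p.2|)
        ≤ Real.log |p.1 - p.2| := by
      rcases le_total 1 |p.1 - p.2| with h | h
      · rw [max_eq_right h]
        linarith [le_max_left 0 (-Real.log |p.1 - p.2|)]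
      · rw [max_eq_left h, Real.log_one]
        linarith [le_max_right 0 (-Real.log |p.1 - p.2|)]
    linarith
  rw [integral_sub j2 i3, integral_sub j1 i2, integral_sub (integrable_const _) i1, e2,
    integral_fun_fst (fun x : ℝ => |x|)] at hmono
  simp only [integral_const, probReal_univ, one_smul] at hmono
  linarith

/-- Moving an arbitrarily small proportion of the mass far away raises the logarithmic energy
to any prescribed larger value. -/
lemma exists_integral_log_shiftMixture_eq (hd : HasBoundedSmoothDensity ν)
    (hν : Integrable (fun x => x ^ 2) ν) {c : ℝ}
    (hc : ∫ p : ℝ × ℝ, Real.log |p.1 - p.2| ∂(ν.prod ν) < c) {η : ℝ} (hη : 0 < η) :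
    ∃ δ R : ℝ, 0 ≤ δ ∧ δ ≤ 1 ∧ δ ≤ η ∧
      ∫ p : ℝ × ℝ, Real.log |p.1 - p.2| ∂((shiftMixture ν δ R).prod (shiftMixture ν δ R)) = c := by
  obtain ⟨k, hk⟩ := exists_log_sub_le_integral_log hd hν
  set A := ∫ p : ℝ × ℝ, Real.log |p.1 - p.2| ∂(ν.prod ν)
  set q := min (1 / 4) (η / 2)
  have hq : 0 < q := by positivity
  set R := Real.exp (k + A + (c - A) / (2 * q))
  have hX := hk R (Real.exp_pos _)
  set X := ∫ p : ℝ × ℝ, Real.log |p.1 - p.2| ∂(ν.prod (ν.map (· + R)))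
  rw [Real.log_exp] at hX
  have hcA : 0 < c - A := sub_pos.2 hc
  have hXA : (c - A) / (2 * q) ≤ X - A := by linarith
  have hXA0 : 0 < X - A := lt_of_lt_of_le (by positivity) hXA
  set p := (c - A) / (2 * (X - A))
  have hp0 : 0 < p := by positivity
  have hpq : p ≤ q := by
    rw [div_le_iff₀ (by positivity)] at hXA ⊢
    linarith
  have hp4 : 0 ≤ 1 - 4 * p := by linarith [min_le_left (1 / 4) (η / 2)]
  have hs := Real.sq_sqrt hp4
  have hs0 := Real.sqrt_nonneg (1 - 4 * p)
  set r := √(1 - 4 * p)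
  have hr1 : r ≤ 1 := by nlinarith
  have hδ : (1 - r) / 2 * (1 - (1 - r) / 2) = p := by linarith
  refine ⟨(1 - r) / 2, R, by linarith, by linarith, ?_, ?_⟩
  · have : p ≤ η / 2 := hpq.trans (min_le_right _ _)
    nlinarith
  · rw [integral_log_shiftMixture hd hν (by linarith) (by linarith), hδ]
    change (1 - 2 * p) * A + 2 * p * X = c
    have : p * (2 * (X - A)) = c - A := div_mul_cancel₀ _ (by positivity)
    linarith

end shiftMixture

lemma HasBoundedSmoothDensity.integrable_log {ν : Measure ℝ} [IsFiniteMeasure ν]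
    (hd : HasBoundedSmoothDensity ν) (hν : Integrable (fun x => x ^ 2) ν) :
    Integrable (fun p : ℝ × ℝ => Real.log |p.1 - p.2|) (ν.prod ν) := by
  obtain ⟨M, hM, hle⟩ := hd.exists_le
  have hid := integrable_id_of_integrable_sq hν
  exact integrable_log_abs_sub hM hle hid hid

/-- **Approximation with convergent free entropy.**
Any probability measure `m` with finite second moment and `E(m) > −∞` can be approximated
narrowly by probability measures with bounded smooth densities and finite second moments whose
free entropies converge to `E(m)`. -/
theorem freeEntropy_smooth_approx (m : Measure ℝ) [IsProbabilityMeasure m]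
    (hmom : Integrable (fun x => x ^ 2) m) (hE : ⊥ < freeEntropy m) :
    ∃ ms : ℕ → Measure ℝ,
      (∀ n, IsProbabilityMeasure (ms n)) ∧
      (∀ n, ∃ f : ℝ → ℝ, ContDiff ℝ (⊤ : ℕ∞) f ∧ (∃ M : ℝ, ∀ x, |f x| ≤ M) ∧ (∀ x, 0 ≤ f x) ∧
        ms n = volume.withDensity (fun x => ENNReal.ofReal (f x))) ∧
      (∀ n, Integrable (fun x => x ^ 2) (ms n)) ∧
      (∀ g : BoundedContinuousFunction ℝ ℝ,
        Tendsto (fun n => ∫ x, g x ∂(ms n)) atTop (𝓝 (∫ x, g x ∂m))) ∧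
      Tendsto (fun n => freeEntropy (ms n)) atTop (𝓝 (freeEntropy m)) := by
  have hlog := integrable_log_abs_sub_of_bot_lt_freeEntropy (integrable_id_of_integrable_sq hmom) hE
  have hε₀ : Tendsto (fun n : ℕ => (1 : ℝ) / (n + 1)) atTop (𝓝 0) :=
    tendsto_one_div_add_atTop_nhds_zero_nat
  by_cases hatom : ∀ x, m {x} = 0
  · have hpos (n : ℕ) : (0 : ℝ) < 1 / (n + 1) := by positivity
    have hd (n : ℕ) := hasBoundedSmoothDensity_mollify m (hpos n)
    have hsq (n : ℕ) := integrable_sq_mollify hmom (1 / ((n : ℝ) + 1))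
    refine ⟨fun n => mollify m (1 / (n + 1)), fun n => inferInstance, hd, hsq,
      fun g => (tendsto_integral_mollify m g).comp hε₀, ?_⟩
    simp_rw [freeEntropy_eq_integral hlog, freeEntropy_eq_integral ((hd _).integrable_log (hsq _))]
    exact (continuous_coe_real_ereal.tendsto _).comp
      (((tendsto_integral_log_mollify hmom hatom hlog).comp
        (tendsto_nhdsWithin_iff.2 ⟨hε₀, Eventually.of_forall hpos⟩)).const_mul _)
  · push Not at hatom
    obtain ⟨a, ha⟩ := hatom
    have hex (n : ℕ) : ∃ ε δ R : ℝ, 0 < ε ∧ ε ≤ 1 / (n + 1) ∧ 0 ≤ δ ∧ δ ≤ 1 ∧ δ ≤ 1 / (n + 1) ∧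
        ∫ p : ℝ × ℝ, Real.log |p.1 - p.2| ∂((shiftMixture (mollify m ε) δ R).prod
          (shiftMixture (mollify m ε) δ R))
        = ∫ p : ℝ × ℝ, Real.log |p.1 - p.2| ∂(m.prod m) := by
      have hn : (0 : ℝ) < 1 / (n + 1) := by positivity
      obtain ⟨ε, hε, hlt⟩ := ((eventually_mem_set.2 (Ioc_mem_nhdsGT hn)).and
        ((tendsto_integral_log_mollify_atBot hmom ha).eventually_lt_atBot
          (∫ p : ℝ × ℝ, Real.log |p.1 - p.2| ∂(m.prod m)))).exists
      obtain ⟨δ, R, h0, h1, h2, h3⟩ := exists_integral_log_shiftMixture_eq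
        (hasBoundedSmoothDensity_mollify m hε.1) (integrable_sq_mollify hmom ε) hlt hn
      exact ⟨ε, δ, R, hε.1, hε.2, h0, h1, h2, h3⟩
    choose ε δ R hεpos hεle hδ0 hδ1 hδle heq using hex
    have hd (n : ℕ) := (hasBoundedSmoothDensity_mollify m (hεpos n)).shiftMixture
      (hδ0 n) (hδ1 n) (R n)
    have hsq (n : ℕ) := integrable_sq_shiftMixture (integrable_sq_mollify hmom (ε n)) (δ n) (R n)
    have hprob (n : ℕ) := isProbabilityMeasure_shiftMixture (ν := mollify m (ε n))
      (hδ0 n) (hδ1 n) (R n)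
    have hεlim : Tendsto ε atTop (𝓝 0) := squeeze_zero (fun n => (hεpos n).le) hεle hε₀
    have hδlim : Tendsto δ atTop (𝓝 0) := squeeze_zero hδ0 hδle hε₀
    refine ⟨fun n => shiftMixture (mollify m (ε n)) (δ n) (R n), hprob, hd, hsq, fun g => ?_, ?_⟩
    · have h1 := (tendsto_integral_mollify m g).comp hεlim
      have h2 : Tendsto (fun n => δ n * (2 * ‖g‖)) atTop (𝓝 0) := by
        simpa using hδlim.mul_const (2 * ‖g‖)
      have h3 := squeeze_zero_norm
        (f := fun n => ∫ x, g x ∂(shiftMixture (mollify m (ε n)) (δ n) (R n))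
          - ∫ x, g x ∂(mollify m (ε n)))
        (fun n => by
          rw [Real.norm_eq_abs]
          exact abs_integral_shiftMixture_sub_le (hδ0 n) (hδ1 n) (R n) g) h2
      simpa using h3.add h1
    · simp_rw [freeEntropy_eq_integral hlog,
        freeEntropy_eq_integral ((hd _).integrable_log (hsq _)), heq]
      exact tendsto_const_nhds
end

section
/- For every real-valued Schwartz function u on ℝ, ∫_ℝ H[u](x)² u(x) dx = (π²/3) ∫_ℝ u(x)³ dx. -/
open MeasureTheory Filter
open scoped Topology

/-- Truncated (unnormalized) Hilbert transform: `∫_{|x−y|≥δ} u(y)/(x−y) dy`. -/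
noncomputable def truncHilbert (u : ℝ → ℝ) (δ x : ℝ) : ℝ :=
  ∫ y in {y : ℝ | δ ≤ |x - y|}, u y / (x - y)

/-- The (unnormalized) Hilbert transform, defined as the principal value
`H[u](x) = lim_{δ→0⁺} ∫_{|x−y|≥δ} u(y)/(x−y) dy`. -/
noncomputable def hilbert (u : ℝ → ℝ) (x : ℝ) : ℝ :=
  limUnder (𝓝[>] (0 : ℝ)) (fun δ => truncHilbert u δ x)

/-- The conjugate Poisson kernel `t / (t² + ε²)`. -/
noncomputable def conjPoisson (ε t : ℝ) : ℝ := t / (t ^ 2 + ε ^ 2)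

/-- The two-dimensional kernel obtained by symmetrizing a product of two conjugate Poisson
kernels over the three differences of a triple of points. -/
noncomputable def symmKernel (p : ℝ × ℝ) : ℝ :=
  (p.1 ^ 2 - p.1 * p.2 + p.2 ^ 2) /
    ((1 + p.1 ^ 2) * (1 + p.2 ^ 2) * (1 + (p.1 - p.2) ^ 2))

section OddKernel

lemma abs_conjPoisson_le_inv (ε t : ℝ) : |conjPoisson ε t| ≤ |t|⁻¹ := by
  unfold conjPoisson
  rcases eq_or_ne t 0 with rfl | ht
  · simp
  · have h : 0 < |t| := abs_pos.mpr ht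
    rw [abs_div, abs_of_nonneg (show 0 ≤ t ^ 2 + ε ^ 2 by positivity),
      div_le_iff₀ (by positivity), ← sq_abs t]
    have : |t|⁻¹ * (|t| ^ 2 + ε ^ 2) = |t| + |t|⁻¹ * ε ^ 2 := by field_simp
    rw [this]
    have : 0 ≤ |t|⁻¹ * ε ^ 2 := by positivity
    linarith

lemma abs_conjPoisson_le {ε : ℝ} (hε : 0 < ε) (t : ℝ) : |conjPoisson ε t| ≤ ε⁻¹ := by
  unfold conjPoisson
  rw [abs_div, abs_of_nonneg (show 0 ≤ t ^ 2 + ε ^ 2 by positivity),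
    div_le_iff₀ (by positivity), ← sq_abs t, inv_mul_eq_div, le_div_iff₀ hε]
  nlinarith [sq_nonneg (|t| - ε), abs_nonneg t, mul_nonneg (abs_nonneg t) hε.le]

lemma conjPoisson_neg (ε t : ℝ) : conjPoisson ε (-t) = -conjPoisson ε t := by
  simp [conjPoisson, neg_div]

lemma measurable_conjPoisson (ε : ℝ) : Measurable (conjPoisson ε) := by
  unfold conjPoisson; fun_prop

lemma tendsto_conjPoisson (t : ℝ) :
    Tendsto (fun ε => conjPoisson ε t) (𝓝[>] 0) (𝓝 t⁻¹) := by
  rcases eq_or_ne t 0 with rfl | ht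
  · simp [conjPoisson]
  · have h : ContinuousAt (fun ε => conjPoisson ε t) 0 := by
      unfold conjPoisson
      refine ContinuousAt.div (by fun_prop) (by fun_prop) (by positivity)
    have h' := h.tendsto
    have e : conjPoisson 0 t = t⁻¹ := by simp only [conjPoisson]; field_simp; ring
    rw [e] at h'
    exact h'.mono_left nhdsWithin_le_nhds

variable {u : ℝ → ℝ} {K : ℝ → ℝ}

lemma integral_sub_mul_odd (hu : Integrable u) (hK : Measurable K)
    (hodd : ∀ t, K (-t) = -K t) {B : ℝ} (hB : ∀ t, |K t| ≤ B) (x : ℝ) :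
    ∫ t, u (x - t) * K t = ∫ t, (u (x - t) - u (x + t)) / 2 * K t := by
  have h1 : Integrable fun t => u (x - t) * K t :=
    (hu.comp_sub_left x).mul_bdd hK.aestronglyMeasurable (ae_of_all _ hB)
  have h2 : Integrable fun t => u (x + t) * K t :=
    (hu.comp_add_left x).mul_bdd hK.aestronglyMeasurable (ae_of_all _ hB)
  have h3 : ∫ t, u (x + t) * K t = -∫ t, u (x - t) * K t := by
    rw [← integral_neg_eq_self, ← integral_neg]
    simp [hodd, sub_eq_add_neg]
  have h4 : ∀ t, (u (x - t) - u (x + t)) / 2 * K t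
      = (u (x - t) * K t - u (x + t) * K t) / 2 := fun t => by ring
  simp_rw [h4]
  rw [integral_div, integral_sub h1 h2, h3]
  ring

/-- An integrable majorant, in `t`, of the odd difference quotient of `u` at `x`. -/
noncomputable def oddMajorant (u : ℝ → ℝ) (L x t : ℝ) : ℝ :=
  (Set.Icc (-1 : ℝ) 1).indicator (fun _ => L) t + (|u (x - t)| + |u (x + t)|) / 2

lemma integrable_oddMajorant (hu : Integrable u) (L x : ℝ) :
    Integrable (oddMajorant u L x) := by
  unfold oddMajorant
  refine Integrable.add ?_ (((hu.comp_sub_left x).abs.add (hu.comp_add_left x).abs).div_const 2)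
  exact (integrable_indicator_iff measurableSet_Icc).mpr (by simp)

lemma integral_oddMajorant (hu : Integrable u) (L x : ℝ) :
    ∫ t, oddMajorant u L x t = 2 * L + ∫ t, |u t| := by
  unfold oddMajorant
  rw [integral_add, integral_div, integral_add (hu.comp_sub_left x).abs (hu.comp_add_left x).abs,
    integral_sub_left_eq_self (fun t => |u t|), integral_add_left_eq_self (fun t => |u t|),
    integral_indicator measurableSet_Icc]
  · simp; norm_num
  · exact (integrable_indicator_iff measurableSet_Icc).mpr (by simp)
  · exact ((hu.comp_sub_left x).abs.add (hu.comp_add_left x).abs).div_const 2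

lemma abs_odd_mul_le_oddMajorant {L : ℝ} (hL : ∀ x y, |u x - u y| ≤ L * |x - y|)
    (hKt : ∀ t, |K t| ≤ |t|⁻¹) (x t : ℝ) :
    |(u (x - t) - u (x + t)) / 2 * K t| ≤ oddMajorant u L x t := by
  unfold oddMajorant
  have hL0 : 0 ≤ L := by simpa using (abs_nonneg _).trans (hL 1 0)
  rw [abs_mul, abs_div, abs_two]
  refine (mul_le_mul_of_nonneg_left (hKt t) (by positivity)).trans ?_
  by_cases ht : t ∈ Set.Icc (-1 : ℝ) 1
  · rw [Set.indicator_of_mem ht]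
    have h1 : |u (x - t) - u (x + t)| / 2 ≤ L * |t| := by
      have h := hL (x - t) (x + t)
      rw [show x - t - (x + t) = -(2 * t) by ring, abs_neg, abs_mul, abs_two] at h
      linarith
    have h2 : |u (x - t) - u (x + t)| / 2 * |t|⁻¹ ≤ L := by
      refine (mul_le_mul_of_nonneg_right h1 (by positivity)).trans ?_
      rw [mul_assoc]
      exact mul_le_of_le_one_right hL0 (mul_inv_le_one)
    have h3 : 0 ≤ (|u (x - t)| + |u (x + t)|) / 2 := by positivity
    linarith
  · rw [Set.indicator_of_notMem ht, zero_add]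
    have h1 : |t|⁻¹ ≤ 1 := by
      apply inv_le_one_of_one_le₀
      by_contra! h
      exact ht (abs_le.mp h.le)
    refine (mul_le_of_le_one_right (by positivity) h1).trans ?_
    have := abs_sub (u (x - t)) (u (x + t))
    linarith

lemma abs_integral_sub_mul_odd_le {L : ℝ} (hu : Integrable u)
    (hL : ∀ x y, |u x - u y| ≤ L * |x - y|) (hK : Measurable K)
    (hodd : ∀ t, K (-t) = -K t) {B : ℝ} (hB : ∀ t, |K t| ≤ B) (hKt : ∀ t, |K t| ≤ |t|⁻¹) (x : ℝ) :
    |∫ t, u (x - t) * K t| ≤ 2 * L + ∫ t, |u t| := by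
  rw [integral_sub_mul_odd hu hK hodd hB, ← integral_oddMajorant hu L x]
  rw [← Real.norm_eq_abs]
  exact norm_integral_le_of_norm_le (integrable_oddMajorant hu L x)
    (ae_of_all _ (abs_odd_mul_le_oddMajorant hL hKt x))

lemma tendsto_integral_sub_mul_odd {K : ℝ → ℝ → ℝ} {L : ℝ} (hu : Integrable u)
    (huc : Continuous u)
    (hL : ∀ x y, |u x - u y| ≤ L * |x - y|) (hK : ∀ δ, Measurable (K δ))
    (hodd : ∀ δ t, K δ (-t) = -K δ t) (hB : ∀ δ > 0, ∀ t, |K δ t| ≤ δ⁻¹)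
    (hKt : ∀ δ t, |K δ t| ≤ |t|⁻¹)
    (hlim : ∀ t, Tendsto (fun δ => K δ t) (𝓝[>] 0) (𝓝 t⁻¹)) (x : ℝ) :
    Tendsto (fun δ => ∫ t, u (x - t) * K δ t) (𝓝[>] 0)
      (𝓝 (∫ t, (u (x - t) - u (x + t)) / 2 * t⁻¹)) := by
  have h : Tendsto (fun δ => ∫ t, (u (x - t) - u (x + t)) / 2 * K δ t) (𝓝[>] 0)
      (𝓝 (∫ t, (u (x - t) - u (x + t)) / 2 * t⁻¹)) := by
    refine tendsto_integral_filter_of_dominated_convergence (oddMajorant u L x)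
      (Eventually.of_forall fun δ => ?_)
      (Eventually.of_forall fun δ => ae_of_all _ (abs_odd_mul_le_oddMajorant hL (hKt δ) x))
      (integrable_oddMajorant hu L x) (ae_of_all _ fun t => (hlim t).const_mul _)
    have := hK δ
    have := huc.measurable
    exact Measurable.aestronglyMeasurable (by fun_prop)
  refine h.congr' ?_
  filter_upwards [self_mem_nhdsWithin] with δ hδ
  exact (integral_sub_mul_odd hu (hK δ) (hodd δ) (hB δ hδ) x).symm

end OddKernel

lemma hilbert_eq {u : ℝ → ℝ} {L : ℝ} (hu : Integrable u) (huc : Continuous u)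
    (hL : ∀ x y, |u x - u y| ≤ L * |x - y|) (x : ℝ) :
    hilbert u x = ∫ t, (u (x - t) - u (x + t)) / 2 * t⁻¹ := by
  let K : ℝ → ℝ → ℝ := fun δ => {t : ℝ | δ ≤ |t|}.indicator fun t => t⁻¹
  have hS : ∀ δ, MeasurableSet {t : ℝ | δ ≤ |t|} := fun δ =>
    measurableSet_le measurable_const measurable_norm
  have hKt : ∀ δ t, |K δ t| ≤ |t|⁻¹ := fun δ t => by
    simp only [K, Set.indicator_apply]
    split_ifs
    · simp [abs_inv]
    · simp
  have htr : ∀ δ, truncHilbert u δ x = ∫ t, u (x - t) * K δ t := fun δ => by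
    have hS' : MeasurableSet {y : ℝ | δ ≤ |x - y|} :=
      measurableSet_le measurable_const (by fun_prop)
    rw [truncHilbert, ← integral_indicator hS', ← integral_sub_left_eq_self _ _ x]
    congr 1 with t
    simp [K, Set.indicator_apply, div_eq_mul_inv]
  refine Tendsto.limUnder_eq ?_
  simp_rw [htr]
  refine tendsto_integral_sub_mul_odd hu huc hL (fun δ => ?_) (fun δ t => ?_)
    (fun δ hδ t => ?_) hKt (fun t => ?_) x
  · exact measurable_inv.indicator (hS δ)
  · simp only [K, Set.indicator_apply, Set.mem_ofPred_eq, abs_neg]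
    split_ifs <;> simp [inv_neg]
  · simp only [K, Set.indicator_apply, Set.mem_ofPred_eq]
    split_ifs with h
    · rw [abs_inv]; exact inv_anti₀ hδ h
    · simpa using hδ.le
  · rcases eq_or_ne t 0 with rfl | ht
    · simp [K, Set.indicator_apply]
    · refine tendsto_const_nhds.congr' ?_
      have : ∀ᶠ δ in 𝓝[>] (0 : ℝ), δ < |t| :=
        nhdsWithin_le_nhds (Iio_mem_nhds (abs_pos.mpr ht))
      filter_upwards [this] with δ hδ
      simp [K, hδ.le]

lemma tendsto_integral_conjPoisson_sq_mul {u : ℝ → ℝ} {L : ℝ} (hu : Integrable u)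
    (huc : Continuous u) (hL : ∀ x y, |u x - u y| ≤ L * |x - y|) :
    Tendsto (fun ε => ∫ x, (∫ t, u (x - t) * conjPoisson ε t) ^ 2 * u x) (𝓝[>] 0)
      (𝓝 (∫ x, hilbert u x ^ 2 * u x)) := by
  refine tendsto_integral_filter_of_dominated_convergence
    (fun x => (2 * L + ∫ t, |u t|) ^ 2 * |u x|) (Eventually.of_forall fun ε => ?_) ?_
    (hu.abs.const_mul _) (ae_of_all _ fun x => ?_)
  · have h1 : Measurable (Function.uncurry fun x t => u (x - t) * conjPoisson ε t) := by
      have := huc.measurable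
      have := measurable_conjPoisson ε
      unfold Function.uncurry
      fun_prop
    have h2 := (h1.stronglyMeasurable.integral_prod_right (ν := volume)).measurable
    have := huc.measurable
    exact Measurable.aestronglyMeasurable (by fun_prop)
  · filter_upwards [self_mem_nhdsWithin] with ε hε
    refine ae_of_all _ fun x => ?_
    rw [norm_mul, norm_pow, Real.norm_eq_abs, Real.norm_eq_abs]
    gcongr
    exact abs_integral_sub_mul_odd_le hu hL (measurable_conjPoisson ε) (conjPoisson_neg ε)
      (abs_conjPoisson_le hε) (abs_conjPoisson_le_inv ε) x
  · rw [hilbert_eq hu huc hL]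
    exact ((tendsto_integral_sub_mul_odd hu huc hL measurable_conjPoisson conjPoisson_neg
      (fun ε hε => abs_conjPoisson_le hε) abs_conjPoisson_le_inv tendsto_conjPoisson
      x).pow 2).mul_const _

section SymmKernel

lemma symmKernel_nonneg (p : ℝ × ℝ) : 0 ≤ symmKernel p := by
  unfold symmKernel
  have : 0 ≤ p.1 ^ 2 - p.1 * p.2 + p.2 ^ 2 := by
    nlinarith [sq_nonneg (p.1 - p.2), sq_nonneg (p.1 + p.2)]
  positivity

lemma continuous_symmKernel : Continuous symmKernel := by
  unfold symmKernel
  exact Continuous.div (by fun_prop) (by fun_prop) fun p => by positivity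

lemma symmKernel_le (p : ℝ × ℝ) :
    symmKernel p ≤ (1 + p.1 ^ 2)⁻¹ * (1 + p.2 ^ 2)⁻¹
      + (1 + (p.1 - p.2) ^ 2)⁻¹ * (1 + p.2 ^ 2)⁻¹
      + (1 + p.1 ^ 2)⁻¹ * (1 + (p.2 - p.1) ^ 2)⁻¹ := by
  unfold symmKernel
  rw [show (p.2 - p.1) ^ 2 = (p.1 - p.2) ^ 2 by ring]
  have : (1 + p.1 ^ 2)⁻¹ * (1 + p.2 ^ 2)⁻¹
      + (1 + (p.1 - p.2) ^ 2)⁻¹ * (1 + p.2 ^ 2)⁻¹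
      + (1 + p.1 ^ 2)⁻¹ * (1 + (p.1 - p.2) ^ 2)⁻¹ =
      ((1 + (p.1 - p.2) ^ 2) + (1 + p.1 ^ 2) + (1 + p.2 ^ 2)) /
      ((1 + p.1 ^ 2) * (1 + p.2 ^ 2) * (1 + (p.1 - p.2) ^ 2)) := by
    field_simp
  rw [this]
  refine div_le_div_of_nonneg_right ?_ (by positivity)
  nlinarith [sq_nonneg (p.1 - p.2), sq_nonneg p.1, sq_nonneg p.2]

lemma integrable_symmKernel : Integrable symmKernel := by
  have h : Integrable (fun p : ℝ × ℝ => (1 + p.1 ^ 2)⁻¹ * (1 + p.2 ^ 2)⁻¹) :=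
    integrable_inv_one_add_sq.mul_prod integrable_inv_one_add_sq
  have h2 := (measurePreserving_sub_prod (volume : Measure ℝ) volume)
    |>.integrable_comp_of_integrable h
  have h3 := (measurePreserving_prod_sub (volume : Measure ℝ) volume)
    |>.integrable_comp_of_integrable h
  refine ((h.add h2).add h3).mono' continuous_symmKernel.aestronglyMeasurable
    (ae_of_all _ fun p => ?_)
  rw [Real.norm_of_nonneg (symmKernel_nonneg p)]
  exact symmKernel_le p

lemma tendsto_log_ratio (s : ℝ) (l : Filter ℝ) (hl : Tendsto (fun t : ℝ => t⁻¹) l (𝓝 0))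
    (h0 : ∀ᶠ t in l, t ≠ 0) :
    Tendsto (fun t => Real.log ((1 + t ^ 2) / (1 + (t - s) ^ 2))) l (𝓝 0) := by
  have hc : ContinuousAt
      (fun r : ℝ => Real.log ((r ^ 2 + 1) / (r ^ 2 + (1 - s * r) ^ 2))) 0 := by
    refine ContinuousAt.log (ContinuousAt.div (by fun_prop) (by fun_prop) (by simp)) (by simp)
  have h := hc.tendsto.comp hl
  simp only [ne_eq, OfNat.ofNat_ne_zero, not_false_eq_true, zero_pow, zero_add, mul_zero,
    sub_zero, one_pow, div_one, Real.log_one] at h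
  refine h.congr' ?_
  filter_upwards [h0] with t ht
  simp only [Function.comp]
  congr 1
  have : t⁻¹ ^ 2 + (1 - s * t⁻¹) ^ 2 = (1 + (t - s) ^ 2) / t ^ 2 := by field_simp
  rw [this, show t⁻¹ ^ 2 + 1 = (1 + t ^ 2) / t ^ 2 by field_simp]
  field_simp

/-- A primitive in `t` of `(1 + t²)⁻¹ (1 + (t - s)²)⁻¹`. -/
noncomputable def poissonPrimitive (s t : ℝ) : ℝ :=
  Real.log ((1 + t ^ 2) / (1 + (t - s) ^ 2)) / (s * (s ^ 2 + 4))
    + (Real.arctan t + Real.arctan (t - s)) / (s ^ 2 + 4)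

lemma hasDerivAt_poissonPrimitive {s : ℝ} (hs : s ≠ 0) (t : ℝ) :
    HasDerivAt (poissonPrimitive s) ((1 + t ^ 2)⁻¹ * (1 + (t - s) ^ 2)⁻¹) t := by
  have hid : HasDerivAt (fun t : ℝ => t - s) 1 t := (hasDerivAt_id t).sub_const s
  have h1 : HasDerivAt (fun t : ℝ => 1 + t ^ 2) (2 * t) t := by
    simpa using ((hasDerivAt_id t).pow 2).const_add 1
  have h2 : HasDerivAt (fun t : ℝ => 1 + (t - s) ^ 2) (2 * (t - s)) t := by
    simpa using (hid.pow 2).const_add 1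
  have h3 := (h1.div h2 (by positivity)).log (by simp only [Pi.div_apply]; positivity)
  have h4 := (Real.hasDerivAt_arctan t).add hid.arctan
  have h5 := (h3.div_const (s * (s ^ 2 + 4))).add (h4.div_const (s ^ 2 + 4))
  refine h5.congr_deriv ?_
  have : s ^ 2 + 4 ≠ 0 := by positivity
  have : 1 + t ^ 2 ≠ 0 := by positivity
  have : 1 + (t - s) ^ 2 ≠ 0 := by positivity
  simp only [Pi.div_apply]
  field_simp
  ring

lemma integral_poisson_mul_poisson {s : ℝ} (hs : s ≠ 0) :
    ∫ t, (1 + t ^ 2)⁻¹ * (1 + (t - s) ^ 2)⁻¹ = 2 * Real.pi / (s ^ 2 + 4) := by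
  have hint : Integrable fun t : ℝ => (1 + t ^ 2)⁻¹ * (1 + (t - s) ^ 2)⁻¹ := by
    refine integrable_inv_one_add_sq.mul_bdd (c := 1)
      (Measurable.aestronglyMeasurable (by fun_prop)) (ae_of_all _ fun t => ?_)
    rw [Real.norm_of_nonneg (by positivity)]
    exact inv_le_one_of_one_le₀ (by nlinarith [sq_nonneg (t - s)])
  have htop : Tendsto (fun t : ℝ => t - s) atTop atTop :=
    tendsto_atTop_add_const_right _ _ tendsto_id
  have hbot : Tendsto (fun t : ℝ => t - s) atBot atBot :=
    tendsto_atBot_add_const_right _ _ tendsto_id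
  have a1 := Real.tendsto_arctan_atTop.mono_right nhdsWithin_le_nhds
  have a2 := Real.tendsto_arctan_atBot.mono_right nhdsWithin_le_nhds
  have h1 := ((tendsto_log_ratio s _ tendsto_inv_atTop_zero (eventually_ne_atTop 0)).div_const
    (s * (s ^ 2 + 4))).add ((a1.add (a1.comp htop)).div_const (s ^ 2 + 4))
  have h2 := ((tendsto_log_ratio s _ tendsto_inv_atBot_zero (eventually_ne_atBot 0)).div_const
    (s * (s ^ 2 + 4))).add ((a2.add (a2.comp hbot)).div_const (s ^ 2 + 4))
  rw [integral_of_hasDerivAt_of_tendsto (hasDerivAt_poissonPrimitive hs) hint h2 h1]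
  ring

lemma integral_symmKernel_right {s : ℝ} (hs : s ≠ 0) :
    ∫ t, symmKernel (s, t) = 2 * Real.pi / (s ^ 2 + 4) := by
  have hi := integrable_inv_one_add_sq
  have hi' : Integrable fun t : ℝ => (1 + (t - s) ^ 2)⁻¹ := hi.comp_sub_right s
  have hint : Integrable fun t : ℝ => (1 + t ^ 2)⁻¹ * (1 + (t - s) ^ 2)⁻¹ :=
    .of_integral_ne_zero (by rw [integral_poisson_mul_poisson hs]; positivity)
  have hdec : ∀ t, symmKernel (s, t) = (1 + s ^ 2)⁻¹ / 2 * (1 + t ^ 2)⁻¹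
      + (1 + s ^ 2)⁻¹ / 2 * (1 + (t - s) ^ 2)⁻¹
      + (1 / 2 - 3 / 2 * (1 + s ^ 2)⁻¹) * ((1 + t ^ 2)⁻¹ * (1 + (t - s) ^ 2)⁻¹) := fun t => by
    simp only [symmKernel]
    rw [show (s - t) ^ 2 = (t - s) ^ 2 by ring]
    have : 1 + (t - s) ^ 2 ≠ 0 := by positivity
    field_simp
    ring
  simp_rw [hdec]
  have hsum : Integrable fun t : ℝ => (1 + s ^ 2)⁻¹ / 2 * (1 + t ^ 2)⁻¹
      + (1 + s ^ 2)⁻¹ / 2 * (1 + (t - s) ^ 2)⁻¹ := (hi.const_mul _).add (hi'.const_mul _)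
  rw [integral_add hsum (hint.const_mul _), integral_add (hi.const_mul _) (hi'.const_mul _),
    integral_const_mul, integral_const_mul,
    integral_const_mul, integral_poisson_mul_poisson hs,
    integral_sub_right_eq_self (fun t : ℝ => (1 + t ^ 2)⁻¹), integral_univ_inv_one_add_sq]
  field_simp
  ring

lemma integral_symmKernel : ∫ p, symmKernel p = Real.pi ^ 2 := by
  rw [Measure.volume_eq_prod, integral_prod _ integrable_symmKernel]
  have h : (fun s : ℝ => ∫ t, symmKernel (s, t))
      =ᵐ[volume] fun s => Real.pi / 2 * (1 + ((1 / 2) * s) ^ 2)⁻¹ := by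
    filter_upwards [Measure.ae_ne volume (0 : ℝ)] with s hs
    rw [integral_symmKernel_right hs]
    have : s ^ 2 + 4 ≠ 0 := by positivity
    have : 1 + (1 / 2 * s) ^ 2 ≠ 0 := by positivity
    field_simp
    ring
  rw [integral_congr_ae h, integral_const_mul,
    Measure.integral_comp_mul_left (fun s : ℝ => (1 + s ^ 2)⁻¹), integral_univ_inv_one_add_sq]
  norm_num
  ring

lemma sum_conjPoisson_mul_eq {ε : ℝ} (hε : 0 < ε) (x s t : ℝ) :
    ε ^ 2 * (conjPoisson ε (x - (x - ε * s)) * conjPoisson ε (x - (x - ε * t))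
      + conjPoisson ε ((x - ε * s) - (x - ε * t)) * conjPoisson ε ((x - ε * s) - x)
      + conjPoisson ε ((x - ε * t) - x) * conjPoisson ε ((x - ε * t) - (x - ε * s)))
      = symmKernel (s, t) := by
  have h : ∀ r, conjPoisson ε (ε * r) = ε⁻¹ * (r / (1 + r ^ 2)) := fun r => by
    unfold conjPoisson
    rw [show (ε * r) ^ 2 + ε ^ 2 = ε ^ 2 * (1 + r ^ 2) by ring]
    field_simp
  rw [show x - (x - ε * s) = ε * s by ring, show x - (x - ε * t) = ε * t by ring,
    show (x - ε * s) - (x - ε * t) = -(ε * (s - t)) by ring,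
    show (x - ε * s) - x = -(ε * s) by ring, show (x - ε * t) - x = -(ε * t) by ring,
    show (x - ε * t) - (x - ε * s) = ε * (s - t) by ring, conjPoisson_neg, conjPoisson_neg,
    conjPoisson_neg, h, h, h]
  simp only [symmKernel]
  have : 1 + (s - t) ^ 2 ≠ 0 := by positivity
  field_simp
  ring

end SymmKernel

section Symmetrization

variable {u : ℝ → ℝ}

/-- The integrand of the triple integral expressing the smoothed left-hand side. -/
noncomputable def tripleIntegrand (u : ℝ → ℝ) (ε : ℝ) (p : ℝ × ℝ × ℝ) : ℝ :=
  u p.1 * (u p.2.1 * u p.2.2) * (conjPoisson ε (p.1 - p.2.1) * conjPoisson ε (p.1 - p.2.2))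

lemma integrable_tripleIntegrand (hu : Integrable u) {ε : ℝ} (hε : 0 < ε) :
    Integrable (tripleIntegrand u ε) := by
  have h : Integrable fun p : ℝ × ℝ × ℝ => u p.1 * (u p.2.1 * u p.2.2) :=
    hu.mul_prod (hu.mul_prod hu)
  refine h.mul_bdd (c := ε⁻¹ * ε⁻¹) ?_ (ae_of_all _ fun p => ?_)
  · have := measurable_conjPoisson ε
    exact Measurable.aestronglyMeasurable (by fun_prop)
  · rw [norm_mul]
    exact mul_le_mul (abs_conjPoisson_le hε _) (abs_conjPoisson_le hε _) (norm_nonneg _)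
      (by positivity)

/-- The cyclic permutation of coordinates `(x, y, z) ↦ (y, z, x)`. -/
def cycle : ℝ × ℝ × ℝ ≃ᵐ ℝ × ℝ × ℝ := MeasurableEquiv.prodComm.trans MeasurableEquiv.prodAssoc

lemma measurePreserving_cycle : MeasurePreserving cycle volume volume :=
  volume_preserving_prodAssoc.comp (Measure.measurePreserving_swap (μ := volume) (ν := volume))

lemma integral_conjPoisson_sq_mul (hu : Integrable u) {ε : ℝ} (hε : 0 < ε) :
    ∫ x, (∫ t, u (x - t) * conjPoisson ε t) ^ 2 * u x = ∫ p, tripleIntegrand u ε p := by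
  rw [Measure.volume_eq_prod, integral_prod _ (integrable_tripleIntegrand hu hε)]
  congr 1 with x
  have h : ∫ t, u (x - t) * conjPoisson ε t = ∫ y, u y * conjPoisson ε (x - y) := by
    rw [← integral_sub_left_eq_self _ _ x]
    simp
  have h2 : ∀ q : ℝ × ℝ, tripleIntegrand u ε (x, q)
      = u x * ((u q.1 * conjPoisson ε (x - q.1)) * (u q.2 * conjPoisson ε (x - q.2))) := fun q => by
    simp only [tripleIntegrand]; ring
  simp_rw [h2]
  rw [integral_const_mul, Measure.volume_eq_prod,
    integral_prod_mul (fun y => u y * conjPoisson ε (x - y)) (fun y => u y * conjPoisson ε (x - y)),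
    h]
  ring

lemma integral_prod_eq_scaled (f : ℝ × ℝ → ℝ) {ε : ℝ} (hε : 0 < ε) (x : ℝ) :
    ∫ q, f q = ∫ q : ℝ × ℝ, ε ^ 2 * f (x - ε * q.1, x - ε * q.2) := by
  have h := Measure.integral_comp_smul (volume : Measure (ℝ × ℝ)) (fun q => f ((x, x) - q)) ε
  rw [integral_sub_left_eq_self f volume (x, x)] at h
  rw [integral_const_mul]
  simp only [Module.finrank_prod, Module.finrank_self, smul_eq_mul] at h
  rw [abs_of_nonneg (by positivity)] at h
  have h' : ∫ q : ℝ × ℝ, f (x - ε * q.1, x - ε * q.2) = (ε ^ (1 + 1))⁻¹ * ∫ q, f q := h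
  rw [h']
  field_simp

lemma integrable_mul_symmKernel (hu : Integrable u) (huc : Continuous u) {C : ℝ}
    (hC : ∀ x, |u x| ≤ C) (ε : ℝ) :
    Integrable fun p : ℝ × ℝ × ℝ => u p.1 * symmKernel p.2
      * (u (p.1 - ε * p.2.1) * u (p.1 - ε * p.2.2)) := by
  refine (hu.mul_prod integrable_symmKernel).mul_bdd (c := C * C)
    (Continuous.aestronglyMeasurable (by fun_prop)) (ae_of_all _ fun p => ?_)
  rw [norm_mul]
  exact mul_le_mul (hC _) (hC _) (norm_nonneg _) ((abs_nonneg _).trans (hC 0))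

lemma three_mul_integral_tripleIntegrand (hu : Integrable u) (huc : Continuous u) {C : ℝ}
    (hC : ∀ x, |u x| ≤ C) {ε : ℝ} (hε : 0 < ε) :
    3 * ∫ p, tripleIntegrand u ε p = ∫ p : ℝ × ℝ × ℝ, u p.1 * symmKernel p.2
      * (u (p.1 - ε * p.2.1) * u (p.1 - ε * p.2.2)) := by
  have hI := integrable_tripleIntegrand hu hε
  have hI1 : Integrable fun p => tripleIntegrand u ε (cycle p) :=
    measurePreserving_cycle.integrable_comp_of_integrable hI
  have hI2 : Integrable fun p => tripleIntegrand u ε (cycle (cycle p)) :=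
    measurePreserving_cycle.integrable_comp_of_integrable hI1
  have e1 : ∫ p, tripleIntegrand u ε (cycle p) = ∫ p, tripleIntegrand u ε p :=
    measurePreserving_cycle.integral_comp' _
  have e2 : ∫ p, tripleIntegrand u ε (cycle (cycle p)) = ∫ p, tripleIntegrand u ε p :=
    (measurePreserving_cycle.integral_comp' (fun p => tripleIntegrand u ε (cycle p))).trans e1
  have hI3 : Integrable fun p => tripleIntegrand u ε p + tripleIntegrand u ε (cycle p)
      + tripleIntegrand u ε (cycle (cycle p)) := (hI.add hI1).add hI2
  have hsum := integral_add (hI.add hI1) hI2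
  simp only [Pi.add_apply] at hsum
  rw [integral_add hI hI1, e1, e2] at hsum
  rw [show 3 * ∫ p, tripleIntegrand u ε p = (∫ p, tripleIntegrand u ε p)
    + (∫ p, tripleIntegrand u ε p) + ∫ p, tripleIntegrand u ε p by ring, ← hsum,
    Measure.volume_eq_prod, integral_prod _ hI3,
    integral_prod _ (integrable_mul_symmKernel hu huc hC ε)]
  congr 1 with x
  rw [integral_prod_eq_scaled _ hε x]
  congr 1 with q
  rw [← sum_conjPoisson_mul_eq hε x q.1 q.2]
  simp only [tripleIntegrand, cycle, MeasurableEquiv.trans_apply, MeasurableEquiv.prodComm,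
    MeasurableEquiv.prodAssoc, MeasurableEquiv.coe_mk, Equiv.prodComm_apply, Prod.swap_prod_mk,
    Equiv.prodAssoc_apply]
  ring

lemma tendsto_integral_mul_symmKernel (hu : Integrable u) (huc : Continuous u) {C : ℝ}
    (hC : ∀ x, |u x| ≤ C) :
    Tendsto (fun ε : ℝ => ∫ p : ℝ × ℝ × ℝ, u p.1 * symmKernel p.2
      * (u (p.1 - ε * p.2.1) * u (p.1 - ε * p.2.2))) (𝓝[>] 0)
      (𝓝 (Real.pi ^ 2 * ∫ x, u x ^ 3)) := by
  have hlim : Real.pi ^ 2 * ∫ x, u x ^ 3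
      = ∫ p : ℝ × ℝ × ℝ, u p.1 * symmKernel p.2 * (u p.1 * u p.1) := by
    have h : ∀ p : ℝ × ℝ × ℝ, u p.1 * symmKernel p.2 * (u p.1 * u p.1)
        = u p.1 ^ 3 * symmKernel p.2 := fun p => by ring
    simp_rw [h]
    rw [Measure.volume_eq_prod, integral_prod_mul (fun x => u x ^ 3) symmKernel,
      integral_symmKernel, mul_comm]
  rw [hlim]
  refine tendsto_integral_filter_of_dominated_convergence
    (fun p => |u p.1 * symmKernel p.2| * (C * C))
    (Eventually.of_forall fun ε => (integrable_mul_symmKernel hu huc hC ε).aestronglyMeasurable)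
    (Eventually.of_forall fun ε => ae_of_all _ fun p => ?_)
    ((hu.mul_prod integrable_symmKernel).abs.mul_const _) (ae_of_all _ fun p => ?_)
  · rw [norm_mul, norm_mul (u _) (u _)]
    exact mul_le_mul_of_nonneg_left
      (mul_le_mul (hC _) (hC _) (norm_nonneg _) ((abs_nonneg _).trans (hC 0))) (norm_nonneg _)
  · have hc : Continuous fun ε : ℝ => u p.1 * symmKernel p.2
      * (u (p.1 - ε * p.2.1) * u (p.1 - ε * p.2.2)) := by fun_prop
    have h := hc.tendsto 0
    simp only [zero_mul, sub_zero] at h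
    exact h.mono_left nhdsWithin_le_nhds

end Symmetrization

lemma SchwartzMap.exists_abs_sub_le (u : SchwartzMap ℝ ℝ) :
    ∃ L : ℝ, ∀ x y, |u x - u y| ≤ L * |x - y| := by
  obtain ⟨L, -, hL⟩ := (SchwartzMap.derivCLM ℝ ℝ u).decay 0 0
  refine ⟨L, fun x y => ?_⟩
  refine Convex.norm_image_sub_le_of_norm_deriv_le (s := Set.univ) (𝕜 := ℝ)
    (fun x _ => u.differentiableAt) (fun x _ => ?_) convex_univ trivial trivial
  simpa using hL x

/-- **Cotlar-type identity.** For every real-valued Schwartz function `u`,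
`∫ H[u]² u = (π²/3) ∫ u³`. -/
theorem integral_hilbert_sq_mul (u : SchwartzMap ℝ ℝ) :
    ∫ x : ℝ, (hilbert (fun y => u y) x) ^ 2 * u x
      = Real.pi ^ 2 / 3 * ∫ x : ℝ, (u x) ^ 3 := by
  obtain ⟨L, hL⟩ := u.exists_abs_sub_le
  obtain ⟨C, -, hC⟩ := u.decay 0 0
  replace hC : ∀ x, |u x| ≤ C := by simpa using hC
  have hu : Integrable (fun y => u y) := u.integrable
  have h1 := tendsto_integral_conjPoisson_sq_mul hu u.continuous hL
  have h2 := (tendsto_integral_mul_symmKernel hu u.continuous hC).div_const 3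
  have h3 := tendsto_nhds_unique_of_eventuallyEq h1 h2 ?_
  · rw [h3]; ring
  · filter_upwards [self_mem_nhdsWithin] with ε hε
    rw [integral_conjPoisson_sq_mul hu hε,
      ← three_mul_integral_tripleIntegrand hu u.continuous hC hε]
    ring
end

section
/- Let ε > 0 and R₀ ∈ ℝ. Let m : [0,∞) × ℝ → [0,∞) be C¹ in (t,x), Lipschitz in x uniformly in t, with m(t,·) a probability density for every t ≥ 0, such that the principal values H[m(t,·)](x) exist, x ↦ m(t,x)H[m(t,·)](x) is differentiable, and ∂ₜm(t,x) + ∂ₓ(m(t,·)H[m(t,·)])(x) + (1/ε)(𝟙_{x>R₀} m(t,x) + max(x−R₀,0)·∂ₓm(t,x)) = 0 holds for all t > 0 and all x ∈ ℝ with x ≠ R₀. Then sup_{x∈ℝ} m(t,x) ≤ sup_{x∈ℝ} m(0,x) for every t ≥ 0. -/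
open MeasureTheory Filter Set
open scoped Topology

theorem integrableOn_div_of_le_abs {v : ℝ → ℝ} (hv : Integrable v) {δ : ℝ} (hδ : 0 < δ)
    {s : Set ℝ} (hs : MeasurableSet s) (hz : ∀ z ∈ s, δ ≤ |z|) :
    IntegrableOn (fun z => v z / z) s := by
  refine Integrable.mono' (hv.norm.div_const δ).integrableOn
    ((hv.aestronglyMeasurable.aemeasurable.div aemeasurable_id).aestronglyMeasurable.restrict)
    ((ae_restrict_iff' hs).2 (.of_forall fun z hzs => ?_))
  rw [norm_div]
  exact div_le_div_of_nonneg_left (norm_nonneg _) hδ (hz z hzs)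

theorem truncHilbert_eq_integral_Ioi {u : ℝ → ℝ} (hu : Integrable u) {δ : ℝ} (hδ : 0 < δ)
    (x : ℝ) :
    truncHilbert u δ x = ∫ z in Ioi δ, (u (x - z) - u (x + z)) / z := by
  have hl : Integrable (fun z => u (x - z)) := hu.comp_sub_left x
  have hr : Integrable (fun z => u (x + z)) := hu.comp_add_left x
  have hset : MeasurableSet {y : ℝ | δ ≤ |x - y|} :=
    measurableSet_le measurable_const (by fun_prop)
  have hset' : MeasurableSet {z : ℝ | δ ≤ |z|} :=
    measurableSet_le measurable_const (by fun_prop)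
  have hsub : truncHilbert u δ x = ∫ z in {z : ℝ | δ ≤ |z|}, u (x - z) / z := by
    rw [truncHilbert, ← integral_indicator hset, ← integral_indicator hset',
      ← integral_sub_left_eq_self _ volume x]
    congr 1
    ext z
    simp [indicator]
  have hunion : {z : ℝ | δ ≤ |z|} = Iic (-δ) ∪ Ici δ := by
    ext z
    simp [le_abs', or_comm]
  have hil : IntegrableOn (fun z => u (x - z) / z) (Ici δ) :=
    integrableOn_div_of_le_abs hl hδ measurableSet_Ici fun z hz => le_trans hz (le_abs_self z)
  have hir : IntegrableOn (fun z => u (x + z) / z) (Ioi δ) :=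
    integrableOn_div_of_le_abs hr hδ measurableSet_Ioi fun z hz => le_trans (le_of_lt hz) (le_abs_self z)
  have hin : IntegrableOn (fun z => u (x - z) / z) (Iic (-δ)) :=
    integrableOn_div_of_le_abs hl hδ measurableSet_Iic fun z hz => by
      have : z ≤ -δ := hz
      linarith [neg_le_abs z]
  have hdisj : Disjoint (Iic (-δ)) (Ici δ) := by
    rw [Set.disjoint_left]
    intro z h1 h2
    simp only [mem_Iic, mem_Ici] at h1 h2
    linarith
  rw [hsub, hunion, setIntegral_union hdisj measurableSet_Ici hin hil,
    integral_Ici_eq_integral_Ioi, ← integral_comp_neg_Ioi]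
  simp only [sub_neg_eq_add, div_neg, integral_neg, sub_div]
  rw [integral_sub (hil.mono_set Ioi_subset_Ici_self) hir]
  ring

theorem neg_le_integral_symmetric_difference {W : ℝ → ℝ} {h κ δ N : ℝ} (hc : Continuous W)
    (hW : ∀ y, 0 ≤ W y) (heven : ∀ y, W (-y) = W y) (hzero : W 0 = 0)
    (hlip : ∀ y ∈ Icc (-(3 * h)) (3 * h), ∀ z ∈ Icc (-(3 * h)) (3 * h),
      |W y - W z| ≤ κ * |y - z|)
    (hκ : 0 ≤ κ) (hδ : 0 < δ) (hδh : δ ≤ 2 * h) (hN : 4 * h ≤ N) :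
    -(6 * κ * h) ≤ ∫ z in δ..N, (W (z + h) - W (z - h)) / z := by
  have hh : 0 < h := by linarith
  have hci : ∀ f : ℝ → ℝ, Continuous f → ∀ c a b : ℝ, -c < a → a ≤ b →
      IntervalIntegrable (fun z => f z / (z + c)) volume a b := by
    intro f hf c a b ha hab
    apply ContinuousOn.intervalIntegrable
    apply ContinuousOn.div (by fun_prop) (by fun_prop)
    intro z hz
    rw [uIcc_of_le hab] at hz
    linarith [hz.1]
  have hci0 : ∀ f : ℝ → ℝ, Continuous f → ∀ a b : ℝ, 0 < a → a ≤ b →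
      IntervalIntegrable (fun z => f z / z) volume a b := by
    intro f hf a b ha hab
    simpa using hci f hf 0 a b (by simpa using ha) hab
  have hF : Continuous fun z => W (z + h) - W (z - h) := by fun_prop
  rw [← intervalIntegral.integral_add_adjacent_intervals (b := 2 * h)
    (hci0 _ hF _ _ hδ hδh) (hci0 _ hF _ _ (by linarith) (by linarith))]
  have hnear : -(4 * κ * h) ≤ ∫ z in δ..(2 * h), (W (z + h) - W (z - h)) / z := by
    have hmono : ∫ _ in δ..(2 * h), (-(2 * κ)) ≤
        ∫ z in δ..(2 * h), (W (z + h) - W (z - h)) / z := by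
      refine intervalIntegral.integral_mono_on hδh (by simp) (hci0 _ hF _ _ hδ hδh) ?_
      intro z hz
      have hz0 : 0 < z := by linarith [hz.1]
      rw [le_div_iff₀ hz0]
      rcases le_total z h with hzh | hzh
      · have h1 := hlip (z + h) ⟨by linarith, by linarith⟩ (h - z) ⟨by linarith, by linarith⟩
        have h2 : W (z - h) = W (h - z) := by rw [← heven (z - h), neg_sub]
        rw [h2]
        have h3 : |z + h - (h - z)| = 2 * z := by
          rw [abs_of_nonneg (by linarith)]; ring
        rw [h3] at h1
        linarith [neg_abs_le (W (z + h) - W (h - z))]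
      · have h1 := hlip (z + h) ⟨by linarith, by linarith [hz.2]⟩ (z - h)
          ⟨by linarith, by linarith [hz.2]⟩
        have h3 : |z + h - (z - h)| = 2 * h := by
          rw [abs_of_nonneg (by linarith)]; ring
        rw [h3] at h1
        nlinarith [neg_abs_le (W (z + h) - W (z - h))]
    rw [intervalIntegral.integral_const, smul_eq_mul] at hmono
    nlinarith
  have hfar : -(2 * κ * h) ≤ ∫ z in (2 * h)..N, (W (z + h) - W (z - h)) / z := by
    have hsplit : ∫ z in (2 * h)..N, (W (z + h) - W (z - h)) / z =
        (∫ y in (3 * h)..(N + h), W y / (y + -h)) - ∫ y in h..(N - h), W y / (y + h) := by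
      simp only [sub_div]
      rw [intervalIntegral.integral_sub (hci0 (fun z => W (z + h)) (by fun_prop) _ _ (by linarith)
        (by linarith)) (hci0 (fun z => W (z - h)) (by fun_prop) _ _ (by linarith) (by linarith))]
      have h1 := intervalIntegral.integral_comp_add_right (a := 2 * h) (b := N)
        (fun y => W y / (y + -h)) h
      have h2 := intervalIntegral.integral_comp_sub_right (a := 2 * h) (b := N)
        (fun y => W y / (y + h)) h
      simp only [add_neg_cancel_right, sub_add_cancel] at h1 h2
      rw [h1, h2, show 2 * h + h = 3 * h by ring, show 2 * h - h = h by ring]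
    have h1 : ∫ y in (3 * h)..(N - h), W y / (y + -h) ≤
        ∫ y in (3 * h)..(N + h), W y / (y + -h) := by
      rw [← intervalIntegral.integral_add_adjacent_intervals (a := 3 * h) (b := N - h)
        (c := N + h) (hci _ hc _ _ _ (by linarith) (by linarith))
        (hci _ hc _ _ _ (by linarith) (by linarith))]
      have : 0 ≤ ∫ y in (N - h)..(N + h), W y / (y + -h) :=
        intervalIntegral.integral_nonneg (by linarith) fun y hy =>
          div_nonneg (hW y) (by linarith [hy.1])
      linarith
    have h2 : ∫ y in (3 * h)..(N - h), W y / (y + h) ≤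
        ∫ y in (3 * h)..(N - h), W y / (y + -h) := by
      refine intervalIntegral.integral_mono_on (by linarith)
        (hci _ hc _ _ _ (by linarith) (by linarith))
        (hci _ hc _ _ _ (by linarith) (by linarith)) fun y hy => ?_
      exact div_le_div_of_nonneg_left (hW y) (by linarith [hy.1]) (by linarith)
    have h3 : ∫ y in h..(3 * h), W y / (y + h) ≤ ∫ _ in h..(3 * h), κ := by
      refine intervalIntegral.integral_mono_on (by linarith)
        (hci _ hc _ _ _ (by linarith) (by linarith)) (by simp) fun y hy => ?_
      have hy0 : 0 < y := by linarith [hy.1]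
      rw [div_le_iff₀ (by linarith)]
      have := hlip y ⟨by linarith, hy.2⟩ 0 ⟨by linarith, by linarith⟩
      rw [hzero, sub_zero, sub_zero, abs_of_pos hy0, abs_of_nonneg (hW y)] at this
      nlinarith
    rw [intervalIntegral.integral_const, smul_eq_mul] at h3
    have h4 := intervalIntegral.integral_add_adjacent_intervals (a := h) (b := 3 * h)
        (c := N - h) (hci _ hc h _ _ (by linarith) (by linarith))
        (hci _ hc h _ _ (by linarith) (by linarith))
    rw [hsplit]
    linarith
  linarith

theorem tendsto_truncHilbert_hilbert {u : ℝ → ℝ} {x : ℝ}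
    (h : ∃ l : ℝ, Tendsto (fun δ => truncHilbert u δ x) (𝓝[>] (0 : ℝ)) (𝓝 l)) :
    Tendsto (fun δ => truncHilbert u δ x) (𝓝[>] (0 : ℝ)) (𝓝 (hilbert u x)) := by
  obtain ⟨l, hl⟩ := h
  rwa [hilbert, hl.limUnder_eq]

theorem hilbert_sub_ge_of_isMax {u : ℝ → ℝ} (hu : Integrable u) (hc : Continuous u) {x : ℝ}
    (hmax : ∀ y, u y ≤ u x)
    (hpv : ∀ y, ∃ l : ℝ, Tendsto (fun δ => truncHilbert u δ y) (𝓝[>] (0 : ℝ)) (𝓝 l))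
    {h κ : ℝ} (hh : 0 < h) (hκ : 0 ≤ κ)
    (hlip : ∀ y ∈ Icc (x - 3 * h) (x + 3 * h), ∀ z ∈ Icc (x - 3 * h) (x + 3 * h),
      |u y - u z| ≤ κ * |y - z|) :
    -(12 * κ * h) ≤ hilbert u (x + h) - hilbert u (x - h) := by
  refine ge_of_tendsto ((tendsto_truncHilbert_hilbert (hpv (x + h))).sub
    (tendsto_truncHilbert_hilbert (hpv (x - h)))) ?_
  filter_upwards [Ioo_mem_nhdsGT (show (0 : ℝ) < 2 * h by linarith)] with δ hδ
  have hI : ∀ a : ℝ, IntegrableOn (fun z => (u (a - z) - u (a + z)) / z) (Ioi δ) := fun a =>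
    integrableOn_div_of_le_abs ((hu.comp_sub_left a).sub (hu.comp_add_left a)) hδ.1
      measurableSet_Ioi fun z hz => le_trans (le_of_lt hz) (le_abs_self z)
  rw [truncHilbert_eq_integral_Ioi hu hδ.1, truncHilbert_eq_integral_Ioi hu hδ.1,
    ← integral_sub (hI _) (hI _)]
  refine ge_of_tendsto (intervalIntegral_tendsto_integral_Ioi δ ((hI (x + h)).sub (hI (x - h)))
    tendsto_id) ?_
  filter_upwards [eventually_ge_atTop (4 * h)] with N hN
  have key := neg_le_integral_symmetric_difference
    (W := fun y => 2 * u x - u (x + y) - u (x - y)) (h := h) (κ := 2 * κ) (δ := δ) (N := N)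
    (by fun_prop) (fun y => by linarith [hmax (x + y), hmax (x - y)])
    (fun y => by rw [sub_neg_eq_add, ← sub_eq_add_neg]; ring)
    (by simp only [add_zero, sub_zero]; ring)
    (fun y hy z hz => by
      have h1 := hlip (x + y) ⟨by linarith [hy.1], by linarith [hy.2]⟩ (x + z)
        ⟨by linarith [hz.1], by linarith [hz.2]⟩
      have h2 := hlip (x - y) ⟨by linarith [hy.2], by linarith [hy.1]⟩ (x - z)
        ⟨by linarith [hz.2], by linarith [hz.1]⟩
      rw [show x + y - (x + z) = y - z by ring] at h1
      rw [show x - y - (x - z) = -(y - z) by ring, abs_neg] at h2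
      rw [abs_le] at h1 h2 ⊢
      constructor <;> linarith [h1.1, h1.2, h2.1, h2.2])
    (by linarith) hδ.1 hδ.2.le hN
  have e : ∀ z, (u (x + h - z) - u (x + h + z)) / z - (u (x - h - z) - u (x - h + z)) / z =
      (2 * u x - u (x + (z + h)) - u (x - (z + h)) -
        (2 * u x - u (x + (z - h)) - u (x - (z - h)))) / z := by
    intro z
    rw [show x + (z + h) = x + h + z by ring, show x - (z + h) = x - h - z by ring,
      show x + (z - h) = x - h + z by ring, show x - (z - h) = x + h - z by ring]
    ring
  simp only [id, e]
  linarith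

theorem deriv_hilbert_nonneg_of_isMax {u : ℝ → ℝ} (hu : Integrable u) (hc : Continuous u)
    {x : ℝ} (hmax : ∀ y, u y ≤ u x) (hs : HasStrictDerivAt u 0 x)
    (hpv : ∀ y, ∃ l : ℝ, Tendsto (fun δ => truncHilbert u δ y) (𝓝[>] (0 : ℝ)) (𝓝 l))
    {d : ℝ} (hd : HasDerivAt (hilbert u) d x) : 0 ≤ d := by
  have hsym : HasDerivAt (fun h => hilbert u (x + h) - hilbert u (x - h)) (d + d) 0 := by
    have h1 : HasDerivAt (fun h => hilbert u (x + h)) d 0 :=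
      HasDerivAt.comp_const_add x 0 (by simpa using hd)
    have h2 : HasDerivAt (fun h => hilbert u (x - h)) (-d) 0 :=
      HasDerivAt.comp_const_sub x 0 (by simpa using hd)
    simpa only [sub_neg_eq_add] using h1.fun_sub h2
  have hslope := (hasDerivWithinAt_iff_tendsto_slope' (s := Ioi (0 : ℝ)) (by simp)).1
    hsym.hasDerivWithinAt
  refine le_of_forall_pos_le_add fun κ hκ => ?_
  have hκ' : 0 < κ / 6 := by positivity
  have hev := hs.isLittleO.bound hκ'
  obtain ⟨r, hr, hrs⟩ := Metric.mem_nhds_iff.1 hev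
  have : -(12 * (κ / 6)) ≤ d + d := by
    refine ge_of_tendsto hslope ?_
    filter_upwards [Ioo_mem_nhdsGT (show (0 : ℝ) < r / 3 by linarith)] with h hh
    have hin : ∀ y ∈ Icc (x - 3 * h) (x + 3 * h), y ∈ Metric.ball x r := fun y hy => by
      rw [Metric.mem_ball, Real.dist_eq, abs_lt]
      constructor <;> linarith [hy.1, hy.2, hh.2]
    have hk := hilbert_sub_ge_of_isMax hu hc hmax hpv hh.1 hκ'.le fun y hy z hz => by
      simpa using hrs (show (y, z) ∈ Metric.ball (x, x) r by
        rw [← ball_prod_same]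
        exact ⟨hin y hy, hin z hz⟩)
    rw [slope_def_field, le_div_iff₀ (by linarith [hh.1])]
    simp only [add_zero, sub_zero, sub_self]
    linarith
  linarith

theorem eventually_lt_of_abs_gt {n : ℝ → ℝ → ℝ} (hc : Continuous (Function.uncurry n))
    {L : NNReal} (hlip : ∀ t, LipschitzWith L (n t)) (hnonneg : ∀ t x, 0 ≤ n t x)
    (hint : ∀ t, Integrable (n t)) (hprob : ∀ t, ∫ x, n t x = 1) {c : ℝ} (hc0 : 0 < c)
    (t₀ : ℝ) : ∃ R, ∀ᶠ t in 𝓝 t₀, ∀ x, R < |x| → n t x < c := by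
  have hL : (0 : ℝ) < L + 1 := by positivity
  set r : ℝ := c / (2 * (L + 1)) with hr
  have hr0 : 0 < r := by positivity
  have hLr : (L : ℝ) * r ≤ c / 2 := by
    have : (L + 1) * r = c / 2 := by rw [hr]; field_simp
    linarith
  have hlim := intervalIntegral_tendsto_integral (hint t₀) tendsto_neg_atTop_atBot tendsto_id
  rw [hprob] at hlim
  obtain ⟨A, hA, hA0⟩ := ((hlim.eventually (lt_mem_nhds (show 1 - c * r < 1 by
    linarith [mul_pos hc0 hr0]))).and (eventually_ge_atTop 0)).exists
  have hcont : Continuous fun t => ∫ x in (-A)..A, n t x :=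
    intervalIntegral.continuous_parametric_intervalIntegral_of_continuous' hc _ _
  refine ⟨A + r, (hcont.continuousAt.eventually (lt_mem_nhds hA)).mono fun t ht x hx => ?_⟩
  by_contra! hcx
  have hmass : c * r ≤ ∫ y in (x - r)..(x + r), n t y := by
    have : ∫ _ in (x - r)..(x + r), c / 2 ≤ ∫ y in (x - r)..(x + r), n t y := by
      refine intervalIntegral.integral_mono_on (by linarith) (by simp)
        (hint t).intervalIntegrable fun y hy => ?_
      have h1 := (hlip t).dist_le_mul x y
      rw [Real.dist_eq, Real.dist_eq] at h1
      have h2 : |x - y| ≤ r := abs_le.2 ⟨by linarith [hy.2], by linarith [hy.1]⟩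
      have h3 : (L : ℝ) * |x - y| ≤ L * r := by gcongr
      linarith [le_abs_self (n t x - n t y)]
    rw [intervalIntegral.integral_const, smul_eq_mul] at this
    linarith
  have hdisj : Disjoint (Ioc (x - r) (x + r)) (Ioc (-A) A) := by
    rw [Set.disjoint_left]
    rintro y ⟨h1, h2⟩ ⟨h3, h4⟩
    rcases lt_abs.1 hx with h | h <;> linarith
  have htotal : (∫ y in (x - r)..(x + r), n t y) + ∫ y in (-A)..A, n t y ≤ 1 := by
    rw [intervalIntegral.integral_of_le (by linarith), intervalIntegral.integral_of_le (by linarith),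
      ← setIntegral_union hdisj measurableSet_Ioc (hint t).integrableOn (hint t).integrableOn,
      ← hprob t]
    exact setIntegral_le_integral (hint t) (.of_forall (hnonneg t))
  have ht' : 1 - c * r < ∫ y in (-A)..A, n t y := ht
  linarith

theorem exists_forall_lt_of_abs_gt {n : ℝ → ℝ → ℝ} (hc : Continuous (Function.uncurry n))
    {L : NNReal} (hlip : ∀ t, LipschitzWith L (n t)) (hnonneg : ∀ t x, 0 ≤ n t x)
    (hint : ∀ t, Integrable (n t)) (hprob : ∀ t, ∫ x, n t x = 1) {c : ℝ} (hc0 : 0 < c)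
    {K : Set ℝ} (hK : IsCompact K) : ∃ R, ∀ t ∈ K, ∀ x, R < |x| → n t x < c := by
  refine hK.induction_on (p := fun S => ∃ R, ∀ t ∈ S, ∀ x, R < |x| → n t x < c)
    ⟨0, by simp⟩ (fun S T hST ⟨R, hR⟩ => ⟨R, fun t ht => hR t (hST ht)⟩) ?_ fun t _ => ?_
  · rintro S T ⟨R, hR⟩ ⟨R', hR'⟩
    refine ⟨max R R', ?_⟩
    rintro t (ht | ht) x hx
    · exact hR t ht x ((le_max_left _ _).trans_lt hx)
    · exact hR' t ht x ((le_max_right _ _).trans_lt hx)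
  · obtain ⟨R, hR⟩ := eventually_lt_of_abs_gt hc hlip hnonneg hint hprob hc0 t
    exact ⟨_, mem_nhdsWithin_of_mem_nhds hR, R, fun s hs => hs⟩

theorem deriv_nonneg_of_max_left {f : ℝ → ℝ} {a t d : ℝ} (ha : a < t)
    (hmax : ∀ s ∈ Ioo a t, f s ≤ f t) (hd : HasDerivAt f d t) : 0 ≤ d := by
  have hslope := (hasDerivWithinAt_iff_tendsto_slope' (s := Iio t) (by simp)).1
    hd.hasDerivWithinAt
  refine ge_of_tendsto hslope ?_
  filter_upwards [Ioo_mem_nhdsLT ha] with s hs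
  rw [slope_def_field]
  exact div_nonneg_of_nonpos (by linarith [hmax s hs]) (by linarith [hs.2])

theorem deriv_mul_hilbert_nonneg_of_isMax {u : ℝ → ℝ} (hu : Integrable u) (hc : Continuous u)
    {x : ℝ} (hpos : 0 < u x) (hmax : ∀ y, u y ≤ u x) (hC1 : ContDiffAt ℝ 1 u x)
    (hpv : ∀ y, ∃ l : ℝ, Tendsto (fun δ => truncHilbert u δ y) (𝓝[>] (0 : ℝ)) (𝓝 l))
    (hdiff : DifferentiableAt ℝ (fun y => u y * hilbert u y) x) :
    0 ≤ deriv (fun y => u y * hilbert u y) x := by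
  have hu0 : deriv u x = 0 := IsLocalMax.deriv_eq_zero (.of_forall hmax)
  have hs : HasStrictDerivAt u 0 x := hu0 ▸ hC1.hasStrictDerivAt one_ne_zero
  have hH : DifferentiableAt ℝ (hilbert u) x := by
    refine (hdiff.div hs.hasDerivAt.differentiableAt hpos.ne').congr_of_eventuallyEq ?_
    filter_upwards [hc.continuousAt.eventually (lt_mem_nhds hpos)] with y hy
    exact (mul_div_cancel_left₀ _ hy.ne').symm
  have h := deriv_hilbert_nonneg_of_isMax hu hc hmax hs hpv hH.hasDerivAt
  rw [(hs.hasDerivAt.fun_mul hH.hasDerivAt).deriv, zero_mul, zero_add]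
  exact mul_nonneg hpos.le h

/-- **`L^∞` bound for the penalized (reflected) Dyson equation.**
A classical solution of `∂ₜm + ∂ₓ(m H[m]) + (1/ε)∂ₓ((x−R₀)₊ m) = 0` satisfies
`sup_x m(t,x) ≤ sup_x m(0,x)` for every `t ≥ 0`. -/
theorem penalized_dyson_sup_bound (ε R₀ : ℝ) (hε : 0 < ε) (m : ℝ → ℝ → ℝ)
    (hC1 : ContDiffOn ℝ 1 (Function.uncurry m) (Ici 0 ×ˢ univ))
    (hlip : ∃ L : NNReal, ∀ t, 0 ≤ t → LipschitzWith L (m t))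
    (hnonneg : ∀ t x, 0 ≤ t → 0 ≤ m t x)
    (hint : ∀ t, 0 ≤ t → Integrable (m t))
    (hprob : ∀ t, 0 ≤ t → ∫ x, m t x = 1)
    (hpv : ∀ t x, 0 ≤ t →
      ∃ l : ℝ, Tendsto (fun δ => truncHilbert (m t) δ x) (𝓝[>] (0 : ℝ)) (𝓝 l))
    (hdiff : ∀ t, 0 ≤ t → Differentiable ℝ (fun y => m t y * hilbert (m t) y))
    (hpde : ∀ t x, 0 < t → x ≠ R₀ →
      deriv (fun s => m s x) t + deriv (fun y => m t y * hilbert (m t) y) x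
        + (1 / ε) * ((if R₀ < x then m t x else 0) + max (x - R₀) 0 * deriv (m t) x) = 0) :
    ∀ t x, 0 ≤ t → m t x ≤ ⨆ y, m 0 y := by
  have hε' : 0 < 1 / ε := one_div_pos.2 hε
  obtain ⟨L, hlip⟩ := hlip
  have hmaxc : Continuous (Function.uncurry fun t x => m (max t 0) x) :=
    hC1.continuousOn.comp_continuous (f := fun p : ℝ × ℝ => (max p.1 0, p.2)) (by fun_prop)
      fun p => ⟨le_max_right p.1 0, mem_univ _⟩
  have hC1at : ∀ t x, 0 < t → ContDiffAt ℝ 1 (Function.uncurry m) (t, x) := fun t x ht =>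
    hC1.contDiffAt (prod_mem_nhds (Ici_mem_nhds ht) univ_mem)
  have hdt : ∀ t x, 0 < t → HasDerivAt (fun s => m s x)
      (fderiv ℝ (Function.uncurry m) (t, x) (1, 0)) t := fun t x ht =>
    HasFDerivAt.comp_hasDerivAt (f := fun s => (s, x)) t
      ((hC1at t x ht).differentiableAt one_ne_zero).hasFDerivAt
      ((hasDerivAt_id t).prodMk (hasDerivAt_const t x))
  have hC1x : ∀ t x, 0 < t → ContDiffAt ℝ 1 (m t) x := fun t x ht =>
    ContDiffAt.comp (g := Function.uncurry m) (f := fun y => (t, y)) x (hC1at t x ht)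
      (by fun_prop)
  have hflux : ∀ t x, 0 < t → deriv (m t) x = 0 →
      deriv (fun s => m s x) t + deriv (fun y => m t y * hilbert (m t) y) x ≤ 0 := by
    intro t x ht hx0
    by_cases hx : x = R₀
    · subst hx
      have hcont : ContinuousAt (fun y => deriv (fun s => m s y) t) x := by
        have h1 : ContinuousAt (fun y => fderiv ℝ (Function.uncurry m) (t, y) (1, 0)) x :=
          (ContinuousAt.comp (g := fderiv ℝ (Function.uncurry m)) (f := fun y => (t, y))
            ((hC1at t x ht).continuousAt_fderiv one_ne_zero) (by fun_prop)).clm_apply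
            continuousAt_const
        exact h1.congr (.of_forall fun y => (hdt t y ht).deriv.symm)
      have hlim : Tendsto (fun y => deriv (fun y => m t y * hilbert (m t) y) y) (𝓝[<] x)
          (𝓝 (-deriv (fun s => m s x) t)) := by
        refine (hcont.neg.tendsto.mono_left nhdsWithin_le_nhds).congr' ?_
        filter_upwards [self_mem_nhdsWithin] with y hy
        have hyx : y < x := hy
        have := hpde t y ht hyx.ne
        rw [if_neg hyx.not_gt, max_eq_right (by linarith)] at this
        simp only [Pi.neg_apply]
        linarith
      have hleft := hasDerivWithinAt_Iic_of_tendsto_deriv (s := Iio x)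
        (hdiff t ht.le).differentiableOn (hdiff t ht.le).continuous.continuousWithinAt
        self_mem_nhdsWithin hlim
      rw [(uniqueDiffWithinAt_Iic x).eq_deriv _
        (hdiff t ht.le x).hasDerivAt.hasDerivWithinAt hleft]
      simp
    · have := hpde t x ht hx
      have hpen : 0 ≤ (1 / ε) * ((if R₀ < x then m t x else 0) +
          max (x - R₀) 0 * deriv (m t) x) := by
        rw [hx0, mul_zero, add_zero]
        refine mul_nonneg hε'.le ?_
        split_ifs
        exacts [hnonneg t x ht.le, le_rfl]
      linarith
  have hdecay : ∀ T c, 0 < c → ∃ R, ∀ t ∈ Icc 0 T, ∀ x, R < |x| → m t x < c := by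
    intro T c hc
    obtain ⟨R, hR⟩ := exists_forall_lt_of_abs_gt hmaxc (L := L)
      (fun t => hlip _ (le_max_right _ _)) (fun t x => hnonneg _ x (le_max_right _ _))
      (fun t => hint _ (le_max_right _ _)) (fun t => hprob _ (le_max_right _ _)) hc
      (isCompact_Icc (a := 0) (b := T))
    refine ⟨R, fun t ht x hx => ?_⟩
    simpa [max_eq_left ht.1] using hR t ht x hx
  have hbdd : BddAbove (range (m 0)) := by
    obtain ⟨R, hR⟩ := hdecay 0 1 one_pos
    obtain ⟨B, hB⟩ := (isCompact_Icc (a := -R) (b := R)).bddAbove_image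
      (hlip 0 le_rfl).continuous.continuousOn
    refine ⟨max B 1, ?_⟩
    rintro _ ⟨x, rfl⟩
    by_cases hx : |x| ≤ R
    · exact le_max_of_le_left (hB ⟨x, abs_le.1 hx, rfl⟩)
    · exact le_max_of_le_right (hR 0 (by simp) x (not_le.1 hx)).le
  intro t₀ x₀ ht₀
  by_contra! hlt
  set M := ⨆ y, m 0 y with hM
  have hM0 : ∀ y, m 0 y ≤ M := le_ciSup hbdd
  have hMnn : 0 ≤ M := (hnonneg 0 0 le_rfl).trans (hM0 0)
  have ht₀' : 0 < t₀ := ht₀.lt_of_ne fun h => by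
    rw [← h] at hlt
    linarith [hM0 x₀]
  set η := (m t₀ x₀ - M) / (2 * t₀) with hη
  have hη0 : 0 < η := div_pos (by linarith) (by linarith)
  have hηt : η * t₀ = (m t₀ x₀ - M) / 2 := by rw [hη]; field_simp
  obtain ⟨R, hR⟩ := hdecay t₀ (m t₀ x₀ - η * t₀) (by linarith)
  have hx₀ : |x₀| ≤ R := by
    by_contra! h
    have := hR t₀ ⟨ht₀, le_rfl⟩ x₀ h
    linarith
  obtain ⟨⟨t₁, x₁⟩, ⟨ht₁, -⟩, hmax⟩ := (isCompact_Icc.prod isCompact_Icc).exists_isMaxOn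
    (s := Icc 0 t₀ ×ˢ Icc (-R) R) (f := fun p : ℝ × ℝ => m (max p.1 0) p.2 - η * p.1)
    ⟨(t₀, x₀), ⟨ht₀, le_rfl⟩, abs_le.1 hx₀⟩
    (hmaxc.sub (continuous_const.mul continuous_fst)).continuousOn
  simp only [mem_Icc] at ht₁
  have hmax' : ∀ t x, 0 ≤ t → t ≤ t₀ → |x| ≤ R → m t x - η * t ≤ m t₁ x₁ - η * t₁ := by
    intro t x ht htt hx
    have := hmax (show (t, x) ∈ Icc 0 t₀ ×ˢ Icc (-R) R from ⟨⟨ht, htt⟩, abs_le.1 hx⟩)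
    simpa [max_eq_left ht, max_eq_left ht₁.1] using this
  have hbig := hmax' t₀ x₀ ht₀ le_rfl hx₀
  have hall : ∀ t x, 0 ≤ t → t ≤ t₀ → m t x - η * t ≤ m t₁ x₁ - η * t₁ := by
    intro t x ht htt
    by_cases hx : |x| ≤ R
    · exact hmax' t x ht htt hx
    · have := hR t ⟨ht, htt⟩ x (not_le.1 hx)
      linarith [mul_nonneg hη0.le ht]
  have ht₁' : 0 < t₁ := ht₁.1.lt_of_ne fun h => by
    rw [← h] at hbig
    linarith [hM0 x₁]
  have hx₁ : ∀ y, m t₁ y ≤ m t₁ x₁ := fun y => by linarith [hall t₁ y ht₁.1 ht₁.2]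
  have hpos : 0 < m t₁ x₁ := by linarith [mul_nonneg hη0.le ht₁.1]
  have htime : 0 ≤ deriv (fun s => m s x₁) t₁ - η := by
    have hd : HasDerivAt (fun s => m s x₁ - η * s) (deriv (fun s => m s x₁) t₁ - η) t₁ := by
      simpa using (hdt t₁ x₁ ht₁').differentiableAt.hasDerivAt.fun_sub
        ((hasDerivAt_id t₁).const_mul η)
    exact deriv_nonneg_of_max_left ht₁' (fun s hs => hall s x₁ hs.1.le (hs.2.le.trans ht₁.2)) hd
  have hspace := deriv_mul_hilbert_nonneg_of_isMax (hint t₁ ht₁.1) (hlip t₁ ht₁.1).continuous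
    hpos hx₁ (hC1x t₁ x₁ ht₁') (fun y => hpv t₁ y ht₁.1) (hdiff t₁ ht₁.1 x₁)
  linarith [hflux t₁ x₁ ht₁' (IsLocalMax.deriv_eq_zero (.of_forall hx₁))]
end
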